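/- Let f : ℝ → ℝ be smooth, positive, with f(x) → 0 as |x| → ∞ and with bounded first and second derivatives, and fix t > 0. Let u : [0,T) × ℝ → ℝ (with T > t) be a classical solution of ∂u/∂s = ∂²u/∂x² − 2 f(x) u − u² with u(s,x) ≤ 0 and with u(s,·) and ∂u/∂x(s,·) bounded for each s. Let v : [0,t] × ℝ → ℝ be nonnegative, solve the backward equation ∂v/∂s = −∂²v/∂x² + 2 f(x) v pointwise, and assume for each s that v(s,·), ∂v/∂x(s,·), ∂²v/∂x²(s,·) and ∂v/∂s(s,·) are continuous, integrable, vanish at ±∞, that these bounds hold locally uniformly in s, and that ∫ℝ v(s,x) dx > 0. Then J(s) = ∫ℝ v(s,x) u(s,x) dx is differentiable on [0,t] and satisfies J'(s) ≤ −J(s)² / ‖v(s,·)‖_{L¹(ℝ)} for all s ∈ [0,t]. -/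

import Mathlib

open MeasureTheory Filter
open scoped ENNReal NNReal

namespace HeatPairing

/-- The second derivative is nonpositive at a local maximum. -/
lemma second_deriv_nonpos_of_isLocalMax {φ φ' : ℝ → ℝ} {d x : ℝ}
    (hφ : ∀ y, HasDerivAt φ (φ' y) y) (hφ' : HasDerivAt φ' d x) (hmax : IsLocalMax φ x) :
    d ≤ 0 := by
  by_contra! hd
  have hderiv : deriv φ = φ' := funext fun y => (hφ y).deriv
  have hmin : IsLocalMin φ x := by
    apply isLocalMin_of_deriv_deriv_pos
    · rw [hderiv, hφ'.deriv]; exact hd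
    · exact hmax.deriv_eq_zero
    · exact (hφ x).continuousAt
  have hconst : φ =ᶠ[nhds x] fun _ => φ x := by
    filter_upwards [hmin, hmax] with y h1 h2 using le_antisymm h2 h1
  have h2 : φ' =ᶠ[nhds x] fun _ => 0 := by
    filter_upwards [hconst.eventuallyEq_nhds] with y hy
    rw [← (hφ y).deriv, hy.deriv_eq]
    simp
  have h3 := h2.deriv_eq
  rw [hφ'.deriv] at h3
  simp at h3
  linarith

/-- The derivative in time is nonnegative at a point that maximizes over earlier times. -/
lemma deriv_nonneg_of_max_left {φ : ℝ → ℝ} {d a s : ℝ} (has : a < s)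
    (hφ : HasDerivAt φ d s) (hmax : ∀ r ∈ Set.Icc a s, φ r ≤ φ s) : 0 ≤ d := by
  have h1 : HasDerivWithinAt φ d (Set.Iio s) s := hφ.hasDerivWithinAt
  have h2 := (hasDerivWithinAt_iff_tendsto_slope' (by simp)).1 h1
  refine ge_of_tendsto h2 ?_
  filter_upwards [Ioo_mem_nhdsLT has] with r hr
  rw [slope_def_field]
  apply div_nonneg_of_nonpos
  · linarith [hmax r ⟨hr.1.le, hr.2.le⟩]
  · linarith [hr.2]

/-- Parabolic maximum principle on a strip, for functions bounded above. -/
lemma parabolic_max_principle {D : ℝ → ℝ → ℝ} {a b C B : ℝ} (hC : 0 ≤ C)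
    (hcont : ContinuousOn (Function.uncurry D) (Set.Icc a b ×ˢ Set.univ))
    (hbdd : ∀ s ∈ Set.Icc a b, ∀ x, D s x ≤ B)
    (hinit : ∀ x, D a x ≤ 0)
    (heq : ∀ s ∈ Set.Ioc a b, ∀ x, 0 < D s x →
      ∃ (ds : ℝ) (d1 : ℝ → ℝ) (d2 : ℝ), HasDerivAt (fun r => D r x) ds s ∧
        (∀ y, HasDerivAt (D s) (d1 y) y) ∧ HasDerivAt d1 d2 x ∧ ds ≤ d2 + C * D s x) :
    ∀ s ∈ Set.Icc a b, ∀ x, D s x ≤ 0 := by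
  intro s₀ hs₀ x₀
  by_contra! hpos
  set l := C + 3 with hl
  obtain ⟨ε, hε, hεlt⟩ : ∃ ε > 0, ε * (Real.exp (l * (s₀ - a)) * (1 + x₀ ^ 2)) < D s₀ x₀ := by
    have hK : 0 < Real.exp (l * (s₀ - a)) * (1 + x₀ ^ 2) := by positivity
    refine ⟨D s₀ x₀ / (2 * (Real.exp (l * (s₀ - a)) * (1 + x₀ ^ 2))), by positivity, ?_⟩
    rw [div_mul_eq_mul_div, div_lt_iff₀ (by positivity)]
    nlinarith
  set b₀ : ℝ → ℝ → ℝ := fun s x => ε * (Real.exp (l * (s - a)) * (1 + x ^ 2)) with hb₀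
  set E : ℝ → ℝ → ℝ := fun s x => Real.exp (-C * (s - a)) * (D s x - b₀ s x) with hE
  set R := |x₀| + 1 + |B| / ε with hR
  have hRpos : 0 < R := by positivity
  have hRx : |x₀| ≤ R := by
    have : 0 ≤ |B| / ε := by positivity
    linarith
  have hRB : B ≤ ε * (1 + R ^ 2) := by
    have h1 : |B| / ε ≤ R := by
      have := abs_nonneg x₀
      linarith
    have h2 : |B| ≤ ε * R := by
      rw [div_le_iff₀ hε] at h1; linarith
    have h3 : R ≤ 1 + R ^ 2 := by nlinarith [sq_nonneg (R - 1)]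
    calc B ≤ |B| := le_abs_self _
      _ ≤ ε * R := h2
      _ ≤ _ := by gcongr
  have hEcont : ContinuousOn (Function.uncurry E) (Set.Icc a b ×ˢ Set.Icc (-R) R) := by
    have h1 : ContinuousOn (Function.uncurry D) (Set.Icc a b ×ˢ Set.Icc (-R) R) :=
      hcont.mono (Set.prod_mono le_rfl (Set.subset_univ _))
    have h2 : Continuous (fun p : ℝ × ℝ => b₀ p.1 p.2) := by simp only [hb₀]; fun_prop
    have h3 : Continuous (fun p : ℝ × ℝ => Real.exp (-C * (p.1 - a))) := by fun_prop
    exact h3.continuousOn.mul (h1.sub h2.continuousOn)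
  obtain ⟨⟨s, x⟩, ⟨hs, hx⟩, hmax⟩ := (isCompact_Icc.prod isCompact_Icc).exists_isMaxOn
    ⟨(s₀, x₀), hs₀, abs_le.1 hRx⟩ hEcont
  simp only at hs hx
  have hmax' : ∀ s' ∈ Set.Icc a b, ∀ x' ∈ Set.Icc (-R) R, E s' x' ≤ E s x :=
    fun s' hs' x' hx' => hmax (show (s', x') ∈ _ from ⟨hs', hx'⟩)
  have hE0 : 0 < E s x := by
    refine lt_of_lt_of_le ?_ (hmax' s₀ hs₀ x₀ (abs_le.1 hRx))
    simp only [hE, hb₀]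
    have : 0 < D s₀ x₀ - ε * (Real.exp (l * (s₀ - a)) * (1 + x₀ ^ 2)) := by linarith
    positivity
  have hDb : b₀ s x < D s x := by
    have := (mul_pos_iff_of_pos_left (Real.exp_pos _)).1 hE0
    linarith
  have hb₀pos : 0 < b₀ s x := by simp only [hb₀]; positivity
  have has : a < s := by
    rcases hs.1.eq_or_lt with h | h
    · rw [← h] at hDb hb₀pos; linarith [hinit x]
    · exact h
  have hexp1 : 1 ≤ Real.exp (l * (s - a)) := by
    apply Real.one_le_exp
    have : 0 ≤ s - a := by linarith
    have : 0 ≤ l := by linarith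
    positivity
  have hxR : |x| < R := by
    by_contra! hcon
    have h1 : R ^ 2 ≤ x ^ 2 := by
      rw [← sq_abs x]; gcongr
    have h2 : ε * (1 + R ^ 2) ≤ b₀ s x := by
      simp only [hb₀]
      gcongr
      nlinarith [sq_nonneg x]
    linarith [hbdd s hs x]
  obtain ⟨ds, d1, d2, hds, hd1, hd2, hle⟩ := heq s ⟨has, hs.2⟩ x (by linarith)
  -- the maximum in space
  have hspace : d2 - ε * (Real.exp (l * (s - a)) * 2) ≤ 0 := by
    refine second_deriv_nonpos_of_isLocalMax (φ := fun y => D s y - b₀ s y)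
      (φ' := fun y => d1 y - ε * (Real.exp (l * (s - a)) * (2 * y))) (x := x) ?_ ?_ ?_
    · intro y
      have : HasDerivAt (fun y => 1 + y ^ 2) (2 * y) y := by
        simpa using (hasDerivAt_pow 2 y).const_add 1
      exact (hd1 y).sub ((this.const_mul _).const_mul _)
    · have : HasDerivAt (fun y : ℝ => 2 * y) 2 x := by simpa using (hasDerivAt_id x).const_mul 2
      exact hd2.sub ((this.const_mul _).const_mul _)
    · have : Set.Ioo (-R) R ∈ nhds x := Ioo_mem_nhds (abs_lt.1 hxR).1 (abs_lt.1 hxR).2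
      filter_upwards [this] with y hy
      exact le_of_mul_le_mul_left (hmax' s hs y ⟨hy.1.le, hy.2.le⟩) (Real.exp_pos _)
  -- the maximum in time
  have htime : 0 ≤ -C * Real.exp (-C * (s - a)) * (D s x - b₀ s x)
      + Real.exp (-C * (s - a)) * (ds - ε * (l * Real.exp (l * (s - a)) * (1 + x ^ 2))) := by
    refine deriv_nonneg_of_max_left (φ := fun r => E r x) has ?_
      (fun r hr => hmax' r ⟨hr.1, hr.2.trans hs.2⟩ x hx)
    have he : ∀ c : ℝ, HasDerivAt (fun r => Real.exp (c * (r - a)))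
        (c * Real.exp (c * (s - a))) s := by
      intro c
      have := (((hasDerivAt_id s).sub_const a).const_mul c).exp
      simpa [mul_comm] using this
    have h2 := (((he l).mul_const (1 + x ^ 2)).const_mul ε)
    exact (he (-C)).mul (hds.sub h2)
  have hexpC := Real.exp_pos (-C * (s - a))
  have h4 : 0 ≤ -C * (D s x - b₀ s x) + (ds - l * b₀ s x) := by
    have : 0 ≤ Real.exp (-C * (s - a)) * (-C * (D s x - b₀ s x) + (ds - l * b₀ s x)) := by
      simp only [hb₀] at htime ⊢
      linarith
    exact (mul_nonneg_iff_of_pos_left hexpC).1 this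
  have h5 : ε * (Real.exp (l * (s - a)) * 2) ≤ 2 * b₀ s x := by
    simp only [hb₀]
    have : 0 < ε * Real.exp (l * (s - a)) := by positivity
    nlinarith [mul_nonneg this.le (sq_nonneg x)]
  nlinarith

/-- The one-dimensional heat kernel. -/
noncomputable def heatKernel (τ z : ℝ) : ℝ :=
  (√(4 * Real.pi * τ))⁻¹ * Real.exp (-z ^ 2 / (4 * τ))

/-- The heat semigroup, as a Gaussian average. -/
noncomputable def heatSemigroup (τ : ℝ) (g : ℝ → ℝ) (x : ℝ) : ℝ :=
  ∫ y, g (x + √(2 * τ) * y) ∂ProbabilityTheory.gaussianReal 0 1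

lemma heatKernel_nonneg (τ z : ℝ) : 0 ≤ heatKernel τ z := by
  unfold heatKernel; positivity

lemma heatKernel_pos {τ : ℝ} (hτ : 0 < τ) (z : ℝ) : 0 < heatKernel τ z := by
  have := Real.pi_pos
  unfold heatKernel; positivity

lemma continuous_heatKernel (τ : ℝ) : Continuous (heatKernel τ) := by
  unfold heatKernel; fun_prop

lemma heatKernel_eq_gaussianPDFReal {τ : ℝ} (hτ : 0 < τ) (x y : ℝ) :
    heatKernel τ (y - x) = ProbabilityTheory.gaussianPDFReal x (Real.toNNReal (2 * τ)) y := by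
  rw [ProbabilityTheory.gaussianPDFReal_def, heatKernel, Real.coe_toNNReal _ (by positivity)]
  ring_nf

lemma integrable_heatKernel {τ : ℝ} (hτ : 0 < τ) (x : ℝ) :
    Integrable (fun y => heatKernel τ (y - x)) := by
  simp_rw [heatKernel_eq_gaussianPDFReal hτ]
  exact ProbabilityTheory.integrable_gaussianPDFReal _ _

lemma integral_heatKernel {τ : ℝ} (hτ : 0 < τ) (x : ℝ) :
    ∫ y, heatKernel τ (y - x) = 1 := by
  simp_rw [heatKernel_eq_gaussianPDFReal hτ]
  exact ProbabilityTheory.integral_gaussianPDFReal_eq_one _ (by simpa using hτ)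

lemma integrable_heatKernel_mul {τ B : ℝ} {g : ℝ → ℝ} (hτ : 0 < τ) (hg : Continuous g)
    (hB : ∀ y, |g y| ≤ B) (x : ℝ) : Integrable (fun y => heatKernel τ (y - x) * g y) :=
  (integrable_heatKernel hτ x).mul_bdd hg.aestronglyMeasurable
    (Eventually.of_forall hB)

lemma heatSemigroup_eq_integral_heatKernel {τ : ℝ} (hτ : 0 < τ) {g : ℝ → ℝ} (hg : Continuous g)
    (x : ℝ) : heatSemigroup τ g x = ∫ y, heatKernel τ (y - x) * g y := by
  have hmap : (ProbabilityTheory.gaussianReal 0 1).map (fun y => x + √(2 * τ) * y) =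
      ProbabilityTheory.gaussianReal x (Real.toNNReal (2 * τ)) := by
    have h1 := ProbabilityTheory.gaussianReal_map_const_mul (μ := 0) (v := 1) (√(2 * τ))
    have h2 := ProbabilityTheory.gaussianReal_map_const_add
      (μ := √(2 * τ) * 0) (v := NNReal.mk (√(2 * τ) ^ 2) (sq_nonneg _) * 1) x
    rw [← h1, Measure.map_map (by fun_prop) (by fun_prop)] at h2
    have h3 : (NNReal.mk (√(2 * τ) ^ 2) (sq_nonneg _) * 1 : ℝ≥0) = Real.toNNReal (2 * τ) := by
      ext
      rw [NNReal.coe_mul, NNReal.coe_mk, Real.sq_sqrt (by positivity),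
        Real.coe_toNNReal _ (by positivity)]
      simp
    rw [h3] at h2
    simpa [Function.comp_def] using h2
  unfold heatSemigroup
  rw [← integral_map (φ := fun y => x + √(2 * τ) * y) (by fun_prop) hg.aestronglyMeasurable, hmap,
    ProbabilityTheory.integral_gaussianReal_eq_integral_smul (by simpa using hτ)]
  simp_rw [heatKernel_eq_gaussianPDFReal hτ, smul_eq_mul]

lemma heatSemigroup_zero (g : ℝ → ℝ) (x : ℝ) : heatSemigroup 0 g x = g x := by
  simp [heatSemigroup]

lemma integrable_heatSemigroup_integrand {B : ℝ} {g : ℝ → ℝ} (hg : Continuous g)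
    (hB : ∀ y, |g y| ≤ B) (τ x : ℝ) :
    Integrable (fun y => g (x + √(2 * τ) * y)) (ProbabilityTheory.gaussianReal 0 1) :=
  Integrable.of_bound (by fun_prop) B (Eventually.of_forall fun y => hB _)

lemma heatSemigroup_le {B : ℝ} {g : ℝ → ℝ} (hg : Continuous g) {K : ℝ}
    (hK : ∀ y, |g y| ≤ K) (hB : ∀ y, g y ≤ B) (τ x : ℝ) : heatSemigroup τ g x ≤ B := by
  have := integral_mono (integrable_heatSemigroup_integrand hg hK τ x)
    (integrable_const (μ := ProbabilityTheory.gaussianReal 0 1) B) (fun y => hB _)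
  simpa [heatSemigroup] using this

lemma abs_heatSemigroup_le {B : ℝ} {g : ℝ → ℝ} (hB : ∀ y, |g y| ≤ B) (τ x : ℝ) :
    |heatSemigroup τ g x| ≤ B := by
  have := norm_integral_le_of_norm_le_const (μ := ProbabilityTheory.gaussianReal 0 1)
    (f := fun y => g (x + √(2 * τ) * y)) (C := B) (Eventually.of_forall fun y => hB _)
  simpa [heatSemigroup] using this

lemma heatSemigroup_nonneg {g : ℝ → ℝ} (h : ∀ y, 0 ≤ g y) (τ x : ℝ) :
    0 ≤ heatSemigroup τ g x := integral_nonneg fun _ => h _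

lemma continuous_heatSemigroup {B : ℝ} {g : ℝ → ℝ} (hg : Continuous g) (hB : ∀ y, |g y| ≤ B) :
    Continuous (fun p : ℝ × ℝ => heatSemigroup p.1 g p.2) := by
  unfold heatSemigroup
  refine continuous_of_dominated (bound := fun _ => B) (fun p => ?_) (fun p => ?_)
    (integrable_const _) ?_
  · exact (by fun_prop : Continuous _).aestronglyMeasurable
  · exact Eventually.of_forall fun y => hB _
  · exact Eventually.of_forall fun y => by fun_prop

/-- Heat kernels at different times are comparable from above. -/
lemma heatKernel_le_sqrt_mul {τ β : ℝ} (hτ : 0 < τ) (hτβ : τ ≤ β) (z : ℝ) :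
    heatKernel τ z ≤ √(β / τ) * heatKernel β z := by
  have hβ : 0 < β := hτ.trans_le hτβ
  have hpi := Real.pi_pos
  have h1 : √(β / τ) * (√(4 * Real.pi * β))⁻¹ = (√(4 * Real.pi * τ))⁻¹ := by
    rw [← Real.sqrt_inv, ← Real.sqrt_mul (by positivity), ← Real.sqrt_inv]
    congr 1
    field_simp
  unfold heatKernel
  rw [← mul_assoc, h1]
  rw [neg_div, neg_div]
  gcongr

lemma heatSemigroup_le_sqrt_mul {τ β K : ℝ} (hτ : 0 < τ) (hτβ : τ ≤ β) {g : ℝ → ℝ}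
    (hg : Continuous g) (hK : ∀ y, |g y| ≤ K) (h0 : ∀ y, 0 ≤ g y) (x : ℝ) :
    heatSemigroup τ g x ≤ √(β / τ) * heatSemigroup β g x := by
  have hβ : 0 < β := hτ.trans_le hτβ
  rw [heatSemigroup_eq_integral_heatKernel hτ hg, heatSemigroup_eq_integral_heatKernel hβ hg,
    ← integral_const_mul]
  refine integral_mono (integrable_heatKernel_mul hτ hg hK x)
    ((integrable_heatKernel_mul hβ hg hK x).const_mul _) fun y => ?_
  simp only
  rw [← mul_assoc]
  exact mul_le_mul_of_nonneg_right (heatKernel_le_sqrt_mul hτ hτβ _) (h0 y)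

lemma hasDerivAt_heatKernel_space {τ : ℝ} (hτ : 0 < τ) (z : ℝ) :
    HasDerivAt (heatKernel τ) (-(z / (2 * τ)) * heatKernel τ z) z := by
  unfold heatKernel
  have h1 : HasDerivAt (fun z : ℝ => -z ^ 2 / (4 * τ)) (-(2 * z) / (4 * τ)) z := by
    simpa using ((hasDerivAt_pow 2 z).neg.div_const (4 * τ))
  refine (h1.exp.const_mul (√(4 * Real.pi * τ))⁻¹).congr_deriv ?_
  field_simp
  ring

lemma hasDerivAt_heatKernel_space_space {τ : ℝ} (hτ : 0 < τ) (z : ℝ) :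
    HasDerivAt (fun z => -(z / (2 * τ)) * heatKernel τ z)
      ((z ^ 2 / (4 * τ ^ 2) - 1 / (2 * τ)) * heatKernel τ z) z := by
  have h1 : HasDerivAt (fun z : ℝ => -(z / (2 * τ))) (-(1 / (2 * τ))) z :=
    ((hasDerivAt_id z).div_const _).neg
  refine (h1.mul (hasDerivAt_heatKernel_space hτ z)).congr_deriv ?_
  field_simp
  ring

lemma hasDerivAt_heatKernel_time {τ : ℝ} (hτ : 0 < τ) (z : ℝ) :
    HasDerivAt (fun τ => heatKernel τ z)
      ((z ^ 2 / (4 * τ ^ 2) - 1 / (2 * τ)) * heatKernel τ z) τ := by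
  have hpi := Real.pi_pos
  unfold heatKernel
  have h1 : HasDerivAt (fun τ : ℝ => -z ^ 2 / (4 * τ)) (z ^ 2 / (4 * τ ^ 2)) τ := by
    refine ((hasDerivAt_const τ (-z ^ 2)).div ((hasDerivAt_id τ).const_mul 4)
      (by simp; positivity)).congr_deriv ?_
    simp only [id_eq]
    field_simp
    ring
  have h2 : HasDerivAt (fun τ : ℝ => (√(4 * Real.pi * τ))⁻¹)
      (-(1 / (2 * τ)) * (√(4 * Real.pi * τ))⁻¹) τ := by
    have h3 : HasDerivAt (fun τ : ℝ => 4 * Real.pi * τ) (4 * Real.pi) τ := by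
      simpa using (hasDerivAt_id τ).const_mul (4 * Real.pi)
    refine ((h3.sqrt (by positivity)).inv (by positivity)).congr_deriv ?_
    rw [Real.sq_sqrt (by positivity)]
    field_simp
  refine (h2.mul h1.exp).congr_deriv ?_
  ring

lemma sq_mul_exp_le {τ : ℝ} (hτ : 0 < τ) (z : ℝ) :
    z ^ 2 * Real.exp (-z ^ 2 / (8 * τ)) ≤ 8 * τ := by
  have h := Real.add_one_le_exp (z ^ 2 / (8 * τ))
  rw [neg_div, Real.exp_neg, mul_inv_le_iff₀ (Real.exp_pos _)]
  have h2 : 8 * τ * (z ^ 2 / (8 * τ)) = z ^ 2 := by field_simp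
  nlinarith

lemma heatKernel_eq_mul_exp {τ : ℝ} (hτ : 0 < τ) (z : ℝ) :
    heatKernel τ z = (√(4 * Real.pi * τ))⁻¹ *
      (Real.exp (-z ^ 2 / (8 * τ)) * Real.exp (-z ^ 2 / (8 * τ))) := by
  rw [heatKernel, ← Real.exp_add]
  congr 2
  field_simp
  ring

lemma abs_heatKernel_space_le {τ : ℝ} (hτ : 0 < τ) (z : ℝ) :
    |(-(z / (2 * τ))) * heatKernel τ z| ≤
      (1 + 8 * τ) / (4 * τ) * (√(4 * Real.pi * τ))⁻¹ * Real.exp (-z ^ 2 / (8 * τ)) := by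
  have h0 : Real.exp (-z ^ 2 / (8 * τ)) ≤ 1 := by
    apply Real.exp_le_one_iff.2
    rw [neg_div]
    simp only [Left.neg_nonpos_iff]; positivity
  have h1 : |z| * Real.exp (-z ^ 2 / (8 * τ)) ≤ (1 + 8 * τ) / 2 := by
    have := sq_mul_exp_le hτ z
    have h2 : |z| ≤ (1 + z ^ 2) / 2 := by
      rw [← sq_abs z]; nlinarith [sq_nonneg (|z| - 1)]
    have h3 := mul_le_mul_of_nonneg_right h2 (Real.exp_pos (-z ^ 2 / (8 * τ))).le
    nlinarith
  rw [abs_mul, abs_neg, abs_div, abs_of_pos (show 0 < 2 * τ by positivity),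
    abs_of_nonneg (heatKernel_nonneg τ z), heatKernel_eq_mul_exp hτ]
  set A := (√(4 * Real.pi * τ))⁻¹
  have hA : 0 ≤ A := by positivity
  set e := Real.exp (-z ^ 2 / (8 * τ))
  have he : 0 < e := Real.exp_pos _
  calc |z| / (2 * τ) * (A * (e * e)) = (|z| * e) * (A * e / (2 * τ)) := by ring
    _ ≤ (1 + 8 * τ) / 2 * (A * e / (2 * τ)) := by gcongr
    _ = _ := by field_simp; ring

lemma abs_heatKernel_time_le {τ : ℝ} (hτ : 0 < τ) (z : ℝ) :
    |(z ^ 2 / (4 * τ ^ 2) - 1 / (2 * τ)) * heatKernel τ z| ≤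
      5 / (2 * τ) * (√(4 * Real.pi * τ))⁻¹ * Real.exp (-z ^ 2 / (8 * τ)) := by
  have h0 : Real.exp (-z ^ 2 / (8 * τ)) ≤ 1 := by
    apply Real.exp_le_one_iff.2
    rw [neg_div]
    simp only [Left.neg_nonpos_iff]; positivity
  have h1 := sq_mul_exp_le hτ z
  rw [abs_mul, abs_of_nonneg (heatKernel_nonneg τ z), heatKernel_eq_mul_exp hτ]
  have h2 : |z ^ 2 / (4 * τ ^ 2) - 1 / (2 * τ)| ≤ z ^ 2 / (4 * τ ^ 2) + 1 / (2 * τ) := by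
    refine (abs_sub _ _).trans_eq ?_
    rw [abs_of_nonneg (by positivity), abs_of_nonneg (by positivity)]
  set A := (√(4 * Real.pi * τ))⁻¹
  have hA : 0 ≤ A := by positivity
  set e := Real.exp (-z ^ 2 / (8 * τ))
  have he : 0 < e := Real.exp_pos _
  calc |z ^ 2 / (4 * τ ^ 2) - 1 / (2 * τ)| * (A * (e * e))
      ≤ (z ^ 2 / (4 * τ ^ 2) + 1 / (2 * τ)) * (A * (e * e)) := by gcongr
    _ = (z ^ 2 * e / (4 * τ ^ 2) + 1 * e / (2 * τ)) * (A * e) := by ring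
    _ ≤ (8 * τ / (4 * τ ^ 2) + 1 * 1 / (2 * τ)) * (A * e) := by gcongr
    _ = _ := by field_simp; ring

lemma integrable_exp_shift {c : ℝ} (hc : 0 < c) (x : ℝ) :
    Integrable (fun y : ℝ => Real.exp (-(y - x) ^ 2 / c)) := by
  have h := (integrable_exp_neg_mul_sq (b := 1 / c) (by positivity)).comp_sub_right x
  refine h.congr (Eventually.of_forall fun y => ?_)
  simp only
  ring_nf

lemma exp_shift_le {τ x x' : ℝ} (hτ : 0 < τ) (hx : |x' - x| ≤ 1) (y : ℝ) :
    Real.exp (-(y - x') ^ 2 / (8 * τ)) ≤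
      Real.exp (1 / (8 * τ)) * Real.exp (-(y - x) ^ 2 / (16 * τ)) := by
  rw [← Real.exp_add]
  apply Real.exp_le_exp.2
  have h1 : (x' - x) ^ 2 ≤ 1 := by rw [← sq_abs]; nlinarith [abs_nonneg (x' - x)]
  have h2 : (y - x) ^ 2 ≤ 2 * (y - x') ^ 2 + 2 := by nlinarith [sq_nonneg ((y - x') - (x' - x))]
  have h3 : -(y - x') ^ 2 / (8 * τ) = -(2 * (y - x') ^ 2) / (16 * τ) := by field_simp; ring
  have h4 : 1 / (8 * τ) = 2 / (16 * τ) := by field_simp; ring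
  rw [h3, h4, ← add_div]
  gcongr
  linarith

/-- Differentiation in space under a convolution whose kernel derivative has Gaussian decay. -/
lemma hasDerivAt_integral_kernel_space {k k' : ℝ → ℝ} {τ A B : ℝ} (hτ : 0 < τ)
    (hk : ∀ z, HasDerivAt k (k' z) z) (hk' : Continuous k')
    (hkA : ∀ z, |k' z| ≤ A * Real.exp (-z ^ 2 / (8 * τ)))
    {g : ℝ → ℝ} (hg : Continuous g) (hB : ∀ y, |g y| ≤ B)
    (hkInt : ∀ x, Integrable fun y => k (y - x) * g y) (x : ℝ) :
    HasDerivAt (fun x => ∫ y, k (y - x) * g y) (∫ y, -k' (y - x) * g y) x := by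
  have hkc : Continuous k := continuous_iff_continuousAt.2 fun z => (hk z).continuousAt
  have hA : 0 ≤ A := by
    have := (abs_nonneg _).trans (hkA 0)
    simpa using this
  refine (hasDerivAt_integral_of_dominated_loc_of_deriv_le
    (F := fun x y => k (y - x) * g y) (F' := fun x y => -k' (y - x) * g y)
    (bound := fun y => A * (Real.exp (1 / (8 * τ)) * Real.exp (-(y - x) ^ 2 / (16 * τ))) * B)
    (Metric.ball_mem_nhds x one_pos) (Eventually.of_forall fun x => ?_) (hkInt x) ?_ ?_ ?_ ?_).2
  · exact (by fun_prop : Continuous _).aestronglyMeasurable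
  · exact (by fun_prop : Continuous _).aestronglyMeasurable
  · refine Eventually.of_forall fun y x' hx' => ?_
    rw [Metric.mem_ball, Real.dist_eq] at hx'
    rw [norm_mul, norm_neg, Real.norm_eq_abs, Real.norm_eq_abs]
    gcongr
    · refine (hkA _).trans ?_
      gcongr
      exact exp_shift_le hτ hx'.le y
    · exact hB y
  · exact (((integrable_exp_shift (by positivity) x).const_mul _).const_mul _).mul_const _
  · refine Eventually.of_forall fun y x' _ => ?_
    have h1 : HasDerivAt (fun x => y - x) (-1) x' := by
      simpa using (hasDerivAt_id x').const_sub y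
    have := ((hk (y - x')).comp x' h1).mul_const (g y)
    simpa using this

/-- The heat semigroup solves the heat equation. -/
lemma heatSemigroup_heat_equation {τ B : ℝ} (hτ : 0 < τ) {g : ℝ → ℝ} (hg : Continuous g)
    (hB : ∀ y, |g y| ≤ B) (x : ℝ) :
    ∃ (d1 : ℝ → ℝ) (d2 : ℝ), HasDerivAt (fun r => heatSemigroup r g x) d2 τ ∧
      (∀ y, HasDerivAt (heatSemigroup τ g) (d1 y) y) ∧ HasDerivAt d1 d2 x := by
  have hS : heatSemigroup τ g = fun x => ∫ y, heatKernel τ (y - x) * g y :=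
    funext fun x => heatSemigroup_eq_integral_heatKernel hτ hg x
  set k1 : ℝ → ℝ := fun z => -(z / (2 * τ)) * heatKernel τ z with hk1
  set k2 : ℝ → ℝ := fun z => (z ^ 2 / (4 * τ ^ 2) - 1 / (2 * τ)) * heatKernel τ z with hk2
  have hkc := continuous_heatKernel τ
  have hk1c : Continuous k1 := by fun_prop
  have hk2c : Continuous k2 := by fun_prop
  have hkInt1 : ∀ x, Integrable fun y => k1 (y - x) * g y := fun x => by
    refine Integrable.mul_bdd (c := B) ?_ hg.aestronglyMeasurable (Eventually.of_forall hB)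
    refine Integrable.mono' ((integrable_exp_shift (c := 8 * τ) (by positivity) x).const_mul _)
      (by fun_prop : Continuous _).aestronglyMeasurable
      (Eventually.of_forall fun y => abs_heatKernel_space_le hτ (y - x))
  refine ⟨fun x => ∫ y, -k1 (y - x) * g y, ∫ y, k2 (y - x) * g y, ?_, fun y => ?_, ?_⟩
  · have hev : (fun r => heatSemigroup r g x) =ᶠ[nhds τ]
        fun r => ∫ y, heatKernel r (y - x) * g y := by
      filter_upwards [lt_mem_nhds hτ] with r hr using heatSemigroup_eq_integral_heatKernel hr hg x
    refine HasDerivAt.congr_of_eventuallyEq ?_ hev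
    refine (hasDerivAt_integral_of_dominated_loc_of_deriv_le
      (F := fun r y => heatKernel r (y - x) * g y)
      (F' := fun r y => (((y - x) ^ 2 / (4 * r ^ 2) - 1 / (2 * r)) * heatKernel r (y - x)) * g y)
      (bound := fun y => 5 / (2 * (τ / 2)) * (√(4 * Real.pi * (τ / 2)))⁻¹ *
        Real.exp (-(y - x) ^ 2 / (8 * (2 * τ))) * B)
      (Ioo_mem_nhds (show τ / 2 < τ by linarith) (show τ < 2 * τ by linarith))
      (Eventually.of_forall fun r => ?_) (integrable_heatKernel_mul hτ hg hB x) ?_ ?_ ?_ ?_).2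
    · have := continuous_heatKernel r
      exact (by fun_prop : Continuous _).aestronglyMeasurable
    · exact (by fun_prop : Continuous fun y => k2 (y - x) * g y).aestronglyMeasurable
    · refine Eventually.of_forall fun y r hr => ?_
      have hr0 : 0 < r := by linarith [hr.1]
      have hpi := Real.pi_pos
      rw [norm_mul, Real.norm_eq_abs, Real.norm_eq_abs]
      gcongr
      · refine (abs_heatKernel_time_le hr0 _).trans ?_
        rw [neg_div, neg_div]
        have h1 := hr.1.le
        have h2 := hr.2.le
        gcongr
      · exact hB y
    · exact ((integrable_exp_shift (by positivity) x).const_mul _).mul_const _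
    · refine Eventually.of_forall fun y r hr => ?_
      exact (hasDerivAt_heatKernel_time (by linarith [hr.1]) _).mul_const _
  · rw [hS]
    exact hasDerivAt_integral_kernel_space hτ (hasDerivAt_heatKernel_space hτ) hk1c
      (abs_heatKernel_space_le hτ) hg hB (integrable_heatKernel_mul hτ hg hB) y
  · have := (hasDerivAt_integral_kernel_space hτ (hasDerivAt_heatKernel_space_space hτ) hk2c
      (abs_heatKernel_time_le hτ) hg hB hkInt1 x).neg
    refine (this.congr_of_eventuallyEq (Eventually.of_forall fun x => ?_)).congr_deriv ?_
    · simp only [Pi.neg_apply, hk1]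
      rw [← integral_neg]; congr 1; ext y; ring
    · rw [← integral_neg]; congr 1; ext y; simp only [hk2]; ring

/-- Second order Taylor expansion with Peano remainder. -/
lemma isLittleO_taylor_two {g : ℝ → ℝ} (hg : ContDiff ℝ 2 g) (x : ℝ) :
    (fun z => g (x + z) - g x - z * deriv g x - z ^ 2 / 2 * deriv (deriv g) x)
      =o[nhds 0] fun z => z ^ 2 := by
  have h := taylor_isLittleO_univ (x₀ := x) (n := 2) (f := g) (by exact_mod_cast hg)
  have ht : Tendsto (fun z : ℝ => x + z) (nhds 0) (nhds x) := by
    have : Continuous fun z : ℝ => x + z := by fun_prop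
    simpa using this.tendsto 0
  have h2 := h.comp_tendsto ht
  refine (h2.congr (fun z => ?_) fun z => ?_)
  · simp only [Function.comp, taylorWithinEval_succ, taylor_within_zero_eval,
      iteratedDerivWithin_univ, iteratedDeriv_succ, iteratedDeriv_zero]
    simp
    ring
  · simp

lemma exists_taylor_bound {g : ℝ → ℝ} (hg : ContDiff ℝ 2 g) {B : ℝ} (hB : ∀ y, |g y| ≤ B)
    (x : ℝ) : ∃ K : ℝ, ∀ z, |g (x + z) - g x - z * deriv g x| ≤ K * z ^ 2 := by
  have h := (isLittleO_taylor_two hg x).def one_pos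
  obtain ⟨δ, hδ, hball⟩ := Metric.eventually_nhds_iff.1 h
  have hB0 : 0 ≤ B := (abs_nonneg _).trans (hB 0)
  refine ⟨(1 + |deriv (deriv g) x| / 2) + (2 * B / δ ^ 2 + |deriv g x| / δ), fun z => ?_⟩
  have hp1 : 0 ≤ (1 + |deriv (deriv g) x| / 2) * z ^ 2 := by positivity
  have hp2 : 0 ≤ (2 * B / δ ^ 2 + |deriv g x| / δ) * z ^ 2 := by positivity
  rw [add_mul]
  rcases lt_or_ge |z| δ with hz | hz
  · have h1 := hball (y := z) (by simpa using hz)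
    rw [Real.norm_eq_abs, Real.norm_eq_abs, abs_of_nonneg (sq_nonneg z)] at h1
    have h2 : |g (x + z) - g x - z * deriv g x| ≤
        |g (x + z) - g x - z * deriv g x - z ^ 2 / 2 * deriv (deriv g) x|
          + |z ^ 2 / 2 * deriv (deriv g) x| := by
      have := abs_add_le (g (x + z) - g x - z * deriv g x - z ^ 2 / 2 * deriv (deriv g) x)
        (z ^ 2 / 2 * deriv (deriv g) x)
      simpa using this
    rw [abs_mul, abs_of_nonneg (show 0 ≤ z ^ 2 / 2 by positivity)] at h2
    linarith
  · have h1 : |g (x + z) - g x - z * deriv g x| ≤ 2 * B + |z| * |deriv g x| := by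
      have e1 := abs_sub (g (x + z) - g x) (z * deriv g x)
      have e2 := abs_sub (g (x + z)) (g x)
      rw [abs_mul] at e1
      linarith [hB (x + z), hB x]
    have h2 : 2 * B ≤ 2 * B / δ ^ 2 * z ^ 2 := by
      rw [div_mul_eq_mul_div, le_div_iff₀ (by positivity)]
      have : δ ^ 2 ≤ z ^ 2 := by rw [← sq_abs z]; gcongr
      gcongr
    have h3 : |z| * |deriv g x| ≤ |deriv g x| / δ * z ^ 2 := by
      rw [div_mul_eq_mul_div, le_div_iff₀ hδ, ← sq_abs z]
      have := abs_nonneg z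
      have := abs_nonneg (deriv g x)
      calc |z| * |deriv g x| * δ ≤ |z| * |deriv g x| * |z| := by gcongr
        _ = _ := by ring
    linarith

/-- The second derivative generates the heat semigroup. -/
lemma tendsto_heatSemigroup_generator {g : ℝ → ℝ} (hg : ContDiff ℝ 2 g) {B : ℝ}
    (hB : ∀ y, |g y| ≤ B) (x : ℝ) :
    Tendsto (fun h => (heatSemigroup h g x - g x) / h) (nhdsWithin 0 (Set.Ioi 0))
      (nhds (deriv (deriv g) x)) := by
  set γ := ProbabilityTheory.gaussianReal 0 1 with hγ
  have hgc : Continuous g := hg.continuous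
  have hid : Integrable (fun y : ℝ => y) γ :=
    (ProbabilityTheory.memLp_id_gaussianReal' 1 (by simp)).integrable le_rfl
  have hmean : ∫ y, y ∂γ = 0 := ProbabilityTheory.integral_id_gaussianReal
  have hsq : Integrable (fun y : ℝ => y ^ 2) γ :=
    (ProbabilityTheory.memLp_id_gaussianReal' 2 (by simp)).integrable_sq
  have hvar : ∫ y, y ^ 2 ∂γ = 1 := by
    have h1 := ProbabilityTheory.variance_fun_id_gaussianReal (μ := 0) (v := 1)
    rw [ProbabilityTheory.variance_eq_integral (by fun_prop)] at h1
    simpa [ProbabilityTheory.integral_id_gaussianReal] using h1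
  obtain ⟨K, hK⟩ := exists_taylor_bound hg hB x
  set R : ℝ → ℝ := fun z => g (x + z) - g x - z * deriv g x with hR
  have hRc : Continuous R := by fun_prop
  have hrep : ∀ h : ℝ, 0 < h →
      (heatSemigroup h g x - g x) / h = ∫ y, R (√(2 * h) * y) / h ∂γ := by
    intro h hh
    have e1 : ∫ y, R (√(2 * h) * y) ∂γ = heatSemigroup h g x - g x := by
      simp only [hR]
      rw [integral_sub, integral_sub, integral_mul_const, integral_const_mul, hmean]
      · simp [heatSemigroup, hγ]
      · exact integrable_heatSemigroup_integrand hgc hB h x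
      · exact integrable_const _
      · exact (integrable_heatSemigroup_integrand hgc hB h x).sub (integrable_const _)
      · exact (hid.const_mul _).mul_const _
    rw [← e1, integral_div]
  have hlim : ∫ y, deriv (deriv g) x * y ^ 2 ∂γ = deriv (deriv g) x := by
    rw [integral_const_mul, hvar, mul_one]
  rw [← hlim]
  have hmain : Tendsto (fun h => ∫ y, R (√(2 * h) * y) / h ∂γ) (nhdsWithin 0 (Set.Ioi 0))
      (nhds (∫ y, deriv (deriv g) x * y ^ 2 ∂γ)) := by
    refine tendsto_integral_filter_of_dominated_convergence (fun y => 2 * K * y ^ 2) ?_ ?_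
      (hsq.const_mul _) ?_
    · exact Eventually.of_forall fun h => (by fun_prop : Continuous _).aestronglyMeasurable
    · filter_upwards [self_mem_nhdsWithin] with h hh
      have hh : 0 < h := hh
      refine Eventually.of_forall fun y => ?_
      rw [norm_div, Real.norm_eq_abs, Real.norm_eq_abs, abs_of_pos hh, div_le_iff₀ hh]
      refine (hK _).trans_eq ?_
      rw [mul_pow, Real.sq_sqrt (by positivity)]
      ring
    · refine Eventually.of_forall fun y => ?_
      have ht : Tendsto (fun h : ℝ => √(2 * h) * y) (nhdsWithin 0 (Set.Ioi 0)) (nhds 0) := by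
        have : Continuous fun h : ℝ => √(2 * h) * y := by fun_prop
        have := this.tendsto 0
        simp only [mul_zero, Real.sqrt_zero, zero_mul] at this
        exact this.mono_left nhdsWithin_le_nhds
      have h1 := (isLittleO_taylor_two hg x).comp_tendsto ht
      have h2 : (fun h : ℝ => (√(2 * h) * y) ^ 2) =O[nhdsWithin 0 (Set.Ioi 0)] fun h => h := by
        refine Asymptotics.IsBigO.of_bound (2 * y ^ 2) ?_
        filter_upwards [self_mem_nhdsWithin] with h hh
        have hh : 0 < h := hh
        rw [mul_pow, Real.sq_sqrt (by positivity), Real.norm_eq_abs, Real.norm_eq_abs,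
          abs_of_pos hh, abs_of_nonneg (by positivity)]
        linarith
      have h3 := (h1.trans_isBigO h2).tendsto_div_nhds_zero
      have h4 := h3.add_const (deriv (deriv g) x * y ^ 2)
      rw [zero_add] at h4
      refine h4.congr' ?_
      filter_upwards [self_mem_nhdsWithin] with h hh
      have hh : 0 < h := hh
      simp only [Function.comp, hR]
      rw [mul_pow, Real.sq_sqrt (by positivity)]
      field_simp
      ring
  refine hmain.congr' ?_
  filter_upwards [self_mem_nhdsWithin] with h hh using (hrep h hh).symm

/-- `φ` is bounded by `B` and `B`-Lipschitz. -/
def BoundedLip (B : ℝ) (φ : ℝ → ℝ) : Prop :=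
  (∀ x, |φ x| ≤ B) ∧ ∀ x y, |φ x - φ y| ≤ B * |x - y|

lemma BoundedLip.nonneg {B : ℝ} {φ : ℝ → ℝ} (h : BoundedLip B φ) : 0 ≤ B :=
  (abs_nonneg _).trans (h.1 0)

lemma BoundedLip.mono {B B' : ℝ} {φ : ℝ → ℝ} (h : BoundedLip B φ) (hB : B ≤ B') :
    BoundedLip B' φ :=
  ⟨fun x => (h.1 x).trans hB, fun x y => (h.2 x y).trans (by gcongr)⟩

/-- `w` is a nonnegative solution on `[0,T)` of `w_s = w_xx - 2 f w + w²` with bounded Lipschitz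
time slices; no uniformity in time is required. -/
structure IsNonnegSolution (f : ℝ → ℝ) (T : ℝ) (w : ℝ → ℝ → ℝ) : Prop where
  eqn : ∀ s ∈ Set.Ico (0 : ℝ) T, ∀ x, HasDerivAt (fun r => w r x)
    (deriv (deriv (w s)) x - 2 * f x * w s x + w s x ^ 2) s
  contDiff : ∀ s ∈ Set.Ico (0 : ℝ) T, ContDiff ℝ 2 (w s)
  nonneg : ∀ s ∈ Set.Ico (0 : ℝ) T, ∀ x, 0 ≤ w s x
  bounded : ∀ s ∈ Set.Ico (0 : ℝ) T, ∃ B, BoundedLip B (w s)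

section Comparison

variable {f : ℝ → ℝ} {T : ℝ} {w : ℝ → ℝ → ℝ}

lemma IsNonnegSolution.continuous (hw : IsNonnegSolution f T w) {s : ℝ}
    (hs : s ∈ Set.Ico (0 : ℝ) T) : Continuous (w s) := (hw.contDiff s hs).continuous

lemma IsNonnegSolution.hasDerivAt_space (hw : IsNonnegSolution f T w) {s : ℝ}
    (hs : s ∈ Set.Ico (0 : ℝ) T) (y : ℝ) : HasDerivAt (w s) (deriv (w s) y) y :=
  ((hw.contDiff s hs).differentiable (by norm_num) y).hasDerivAt

lemma IsNonnegSolution.hasDerivAt_space_space (hw : IsNonnegSolution f T w) {s : ℝ}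
    (hs : s ∈ Set.Ico (0 : ℝ) T) (y : ℝ) :
    HasDerivAt (deriv (w s)) (deriv (deriv (w s)) y) y := by
  have h1 : ContDiff ℝ (1 + 1) (w s) := by
    have := hw.contDiff s hs
    norm_num
    exact this
  have h2 : ContDiff ℝ 1 (deriv (w s)) := (contDiff_succ_iff_deriv.1 h1).2.2
  exact (h2.differentiable (by norm_num) y).hasDerivAt

lemma IsNonnegSolution.continuousAt_time (hw : IsNonnegSolution f T w) {s : ℝ}
    (hs : s ∈ Set.Ico (0 : ℝ) T) (x : ℝ) : ContinuousAt (fun r => w r x) s :=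
  (hw.eqn s hs x).continuousAt

/-- Uniform Lipschitz bounds in space upgrade separate continuity to joint continuity. -/
lemma IsNonnegSolution.continuousOn_uncurry (hw : IsNonnegSolution f T w) {a b B : ℝ}
    (ha : 0 ≤ a) (hb : b < T) (hB : ∀ s ∈ Set.Icc a b, BoundedLip B (w s)) :
    ContinuousOn (Function.uncurry w) (Set.Icc a b ×ˢ Set.univ) := by
  rintro ⟨s, x⟩ ⟨hs, -⟩
  simp only at hs
  have hB0 : 0 ≤ B := (hB s hs).nonneg
  have hsT : s ∈ Set.Ico 0 T := ⟨ha.trans hs.1, hs.2.trans_lt hb⟩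
  rw [ContinuousWithinAt, tendsto_iff_dist_tendsto_zero]
  have h1 : Tendsto (fun p : ℝ × ℝ => B * |p.2 - x| + |w p.1 x - w s x|)
      (nhds (s, x)) (nhds 0) := by
    have e1 : Tendsto (fun p : ℝ × ℝ => B * |p.2 - x|) (nhds (s, x)) (nhds 0) := by
      have : Continuous fun p : ℝ × ℝ => B * |p.2 - x| := by fun_prop
      simpa using this.tendsto (s, x)
    have e2 : Tendsto (fun p : ℝ × ℝ => |w p.1 x - w s x|) (nhds (s, x)) (nhds 0) := by
      have e3 : Tendsto (fun p : ℝ × ℝ => w p.1 x) (nhds (s, x)) (nhds (w s x)) :=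
        (hw.continuousAt_time hsT x).tendsto.comp (continuous_fst.tendsto (s, x))
      simpa using (e3.sub_const (w s x)).abs
    simpa using e1.add e2
  refine squeeze_zero' (Eventually.of_forall fun _ => dist_nonneg) ?_
    (h1.mono_left nhdsWithin_le_nhds)
  filter_upwards [self_mem_nhdsWithin] with p hp
  rw [Real.dist_eq]
  simp only [Function.uncurry]
  have e1 := abs_add_le (w p.1 p.2 - w p.1 x) (w p.1 x - w s x)
  have e2 := (hB p.1 hp.1).2 p.2 x
  have e3 : w p.1 p.2 - w p.1 x + (w p.1 x - w s x) = w p.1 p.2 - w s x := by ring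
  rw [e3] at e1
  linarith

lemma heatSemigroup_shift_heat_equation {σ r B : ℝ} (hr : σ < r) {g : ℝ → ℝ} (hg : Continuous g)
    (hB : ∀ y, |g y| ≤ B) (x : ℝ) :
    ∃ (d1 : ℝ → ℝ) (d2 : ℝ), HasDerivAt (fun r => heatSemigroup (r - σ) g x) d2 r ∧
      (∀ y, HasDerivAt (heatSemigroup (r - σ) g) (d1 y) y) ∧ HasDerivAt d1 d2 x := by
  obtain ⟨d1, d2, h1, h2, h3⟩ := heatSemigroup_heat_equation (sub_pos.2 hr) hg hB x
  exact ⟨d1, d2, HasDerivAt.comp_sub_const r σ h1, h2, h3⟩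

lemma continuous_heatSemigroup_shift {B σ : ℝ} {g : ℝ → ℝ} (hg : Continuous g)
    (hB : ∀ y, |g y| ≤ B) :
    Continuous (fun p : ℝ × ℝ => heatSemigroup (p.1 - σ) g p.2) :=
  (continuous_heatSemigroup hg hB).comp
    (by fun_prop : Continuous fun p : ℝ × ℝ => (p.1 - σ, p.2))

/-- A nonnegative solution dominates the damped heat flow. -/
lemma IsNonnegSolution.heatSemigroup_le (hw : IsNonnegSolution f T w) {F : ℝ}
    (hf : ∀ x, 0 ≤ f x) (hF : ∀ x, f x ≤ F) {σ s B : ℝ} (hσ : 0 ≤ σ) (hσs : σ ≤ s) (hs : s < T)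
    (hB : ∀ r ∈ Set.Icc σ s, BoundedLip B (w r)) (x : ℝ) :
    Real.exp (-2 * F * (s - σ)) * heatSemigroup (s - σ) (w σ) x ≤ w s x := by
  have hσT : σ ∈ Set.Ico 0 T := ⟨hσ, hσs.trans_lt hs⟩
  have hF0 : 0 ≤ F := (hf 0).trans (hF 0)
  have hg := hw.continuous hσT
  have hgB := (hB σ ⟨le_rfl, hσs⟩).1
  have hg0 := hw.nonneg σ hσT
  have key := parabolic_max_principle
    (D := fun r y => Real.exp (-2 * F * (r - σ)) * heatSemigroup (r - σ) (w σ) y - w r y)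
    (a := σ) (b := s) (C := 0) (B := B) le_rfl ?_ ?_ ?_ ?_ s ⟨hσs, le_rfl⟩ x
  · simpa using key
  · refine ContinuousOn.sub (Continuous.continuousOn ?_) (hw.continuousOn_uncurry hσ hs hB)
    exact (by fun_prop : Continuous fun p : ℝ × ℝ => Real.exp (-2 * F * (p.1 - σ))).mul
      (continuous_heatSemigroup_shift hg hgB)
  · intro r hr y
    have hrT : r ∈ Set.Ico 0 T := ⟨hσ.trans hr.1, hr.2.trans_lt hs⟩
    have h1 : Real.exp (-2 * F * (r - σ)) ≤ 1 := by
      apply Real.exp_le_one_iff.2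
      have : 0 ≤ F * (r - σ) := mul_nonneg hF0 (by linarith [hr.1])
      linarith
    have h2 := abs_le.1 (abs_heatSemigroup_le hgB (r - σ) y)
    have h3 := hw.nonneg r hrT y
    have h4 := heatSemigroup_nonneg hg0 (r - σ) y
    have h5 := mul_le_mul_of_nonneg_right h1 h4
    linarith
  · intro y
    simp [heatSemigroup_zero]
  · intro r hr y hpos
    have hrT : r ∈ Set.Ico 0 T := ⟨hσ.trans hr.1.le, hr.2.trans_lt hs⟩
    obtain ⟨d1, d2, h1, h2, h3⟩ := heatSemigroup_shift_heat_equation hr.1 hg hgB y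
    have he : HasDerivAt (fun r => Real.exp (-2 * F * (r - σ)))
        (Real.exp (-2 * F * (r - σ)) * (-2 * F * 1)) r :=
      (((hasDerivAt_id r).sub_const σ).const_mul (-2 * F)).exp
    refine ⟨_, _, _, (he.mul h1).sub (hw.eqn r hrT y),
      fun z => ((h2 z).const_mul _).sub (hw.hasDerivAt_space hrT z),
      (h3.const_mul _).sub (hw.hasDerivAt_space_space hrT y), ?_⟩
    set E := Real.exp (-2 * F * (r - σ)) * heatSemigroup (r - σ) (w σ) y with hE
    have hE0 : 0 ≤ E := mul_nonneg (Real.exp_pos _).le (heatSemigroup_nonneg hg0 _ _)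
    have e1 : Real.exp (-2 * F * (r - σ)) * (-2 * F * 1) * heatSemigroup (r - σ) (w σ) y
        = -2 * F * E := by rw [hE]; ring
    rw [e1]
    have e2 : f y * E ≤ F * E := mul_le_mul_of_nonneg_right (hF y) hE0
    have e3 : 0 ≤ f y * (E - w r y) := mul_nonneg (hf y) hpos.le
    nlinarith [sq_nonneg (w r y)]

/-- If the heat flow of the data obeys an `L¹`–`L^∞` type decay, then for short times the solution
is at most twice the heat flow. -/
lemma IsNonnegSolution.le_two_mul_heatSemigroup (hw : IsNonnegSolution f T w)
    (hf : ∀ x, 0 ≤ f x) {σ s B κ : ℝ} (hσ : 0 ≤ σ) (hσs : σ ≤ s) (hs : s < T)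
    (hB : ∀ r ∈ Set.Icc σ s, BoundedLip B (w r)) (hκ : 0 ≤ κ)
    (hdecay : ∀ τ, 0 < τ → τ ≤ s - σ → ∀ y, heatSemigroup τ (w σ) y ≤ κ / √τ)
    (hshort : 4 * κ * √(s - σ) ≤ 1) (x : ℝ) :
    w s x ≤ 2 * heatSemigroup (s - σ) (w σ) x := by
  have hσT : σ ∈ Set.Ico 0 T := ⟨hσ, hσs.trans_lt hs⟩
  have hg := hw.continuous hσT
  have hgB := (hB σ ⟨le_rfl, hσs⟩).1
  have hB0 := (hB σ ⟨le_rfl, hσs⟩).nonneg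
  have hg0 := hw.nonneg σ hσT
  set ρ : ℝ → ℝ := fun r => (1 - 2 * κ * √(r - σ))⁻¹ with hρ
  have hden : ∀ r ∈ Set.Icc σ s, 1 / 2 ≤ 1 - 2 * κ * √(r - σ) := by
    intro r hr
    have h1 : √(r - σ) ≤ √(s - σ) := Real.sqrt_le_sqrt (by linarith [hr.2])
    have h2 : 4 * κ * √(r - σ) ≤ 4 * κ * √(s - σ) := by gcongr
    linarith
  have hρ2 : ∀ r ∈ Set.Icc σ s, ρ r ≤ 2 := by
    intro r hr
    simp only [hρ]
    rw [inv_le_comm₀ (by linarith [hden r hr]) (by norm_num)]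
    linarith [hden r hr]
  have hρ0 : ∀ r ∈ Set.Icc σ s, 0 ≤ ρ r := fun r hr => inv_nonneg.2 (by linarith [hden r hr])
  have key := parabolic_max_principle
    (D := fun r y => w r y - ρ r * heatSemigroup (r - σ) (w σ) y)
    (a := σ) (b := s) (C := 3 * B) (B := B) (by positivity) ?_ ?_ ?_ ?_ s ⟨hσs, le_rfl⟩ x
  · have h1 := heatSemigroup_nonneg hg0 (s - σ) x
    have h2 := mul_le_mul_of_nonneg_right (hρ2 s ⟨hσs, le_rfl⟩) h1
    linarith
  · refine ContinuousOn.sub (hw.continuousOn_uncurry hσ hs hB) ?_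
    refine ContinuousOn.mul ?_ (continuous_heatSemigroup_shift hg hgB).continuousOn
    simp only [hρ]
    refine ContinuousOn.inv₀ (by fun_prop) ?_
    rintro ⟨r, y⟩ ⟨hr, -⟩
    have := hden r hr
    simp only
    linarith
  · intro r hr y
    have h1 := mul_nonneg (hρ0 r hr) (heatSemigroup_nonneg hg0 (r - σ) y)
    have h2 := (abs_le.1 ((hB r hr).1 y)).2
    linarith
  · intro y
    simp [heatSemigroup_zero, hρ]
  · intro r hr y hpos
    have hrI : r ∈ Set.Icc σ s := ⟨hr.1.le, hr.2⟩
    have hrT : r ∈ Set.Ico 0 T := ⟨hσ.trans hr.1.le, hr.2.trans_lt hs⟩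
    obtain ⟨d1, d2, h1, h2, h3⟩ := heatSemigroup_shift_heat_equation hr.1 hg hgB y
    have hτ : 0 < r - σ := sub_pos.2 hr.1
    have hsq : 0 < √(r - σ) := Real.sqrt_pos.2 hτ
    have hρd : HasDerivAt ρ (κ / √(r - σ) * ρ r ^ 2) r := by
      have e1 : HasDerivAt (fun r => 1 - 2 * κ * √(r - σ)) (-(2 * κ * (1 / (2 * √(r - σ))))) r :=
        ((((hasDerivAt_id r).sub_const σ).sqrt hτ.ne').const_mul (2 * κ)).const_sub 1
      have hne : 1 - 2 * κ * √(r - σ) ≠ 0 := by linarith [hden r hrI]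
      refine (e1.inv hne).congr_deriv ?_
      simp only [hρ]
      field_simp
    refine ⟨_, _, _, (hw.eqn r hrT y).sub (hρd.mul h1),
      fun z => (hw.hasDerivAt_space hrT z).sub ((h2 z).const_mul _),
      (hw.hasDerivAt_space_space hrT y).sub (h3.const_mul _), ?_⟩
    set Z := heatSemigroup (r - σ) (w σ) y with hZ
    have hZ0 : 0 ≤ Z := heatSemigroup_nonneg hg0 _ _
    have hZB : Z ≤ B := (abs_le.1 (abs_heatSemigroup_le hgB (r - σ) y)).2
    have hwB := (abs_le.1 ((hB r hrI).1 y)).2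
    have hw0 := hw.nonneg r hrT y
    have hdec : Z ≤ κ / √(r - σ) := hdecay (r - σ) hτ (by linarith [hr.2]) y
    have e1 : ρ r ^ 2 * Z * Z ≤ ρ r ^ 2 * Z * (κ / √(r - σ)) :=
      mul_le_mul_of_nonneg_left hdec (by positivity)
    have e2 : ρ r * Z ≤ 2 * B := mul_le_mul (hρ2 r hrI) hZB hZ0 (by norm_num)
    have e3 : (w r y + ρ r * Z) * (w r y - ρ r * Z) ≤ 3 * B * (w r y - ρ r * Z) :=
      mul_le_mul_of_nonneg_right (by linarith) hpos.le
    have e4 : 0 ≤ f y * w r y := mul_nonneg (hf y) hw0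
    nlinarith

/-- Propagation of spatial increments. -/
lemma IsNonnegSolution.increment_le (hw : IsNonnegSolution f T w)
    (hf : ∀ x, 0 ≤ f x) {L : ℝ} (hL : ∀ x y, |f x - f y| ≤ L * |x - y|) {σ s B K : ℝ}
    (hσ : 0 ≤ σ) (hσs : σ ≤ s) (hs : s < T)
    (hB : ∀ r ∈ Set.Icc σ s, BoundedLip B (w r)) (hK : ∀ r ∈ Set.Icc σ s, ∀ y, w r y ≤ K)
    (h x : ℝ) :
    w s (x + h) - w s x ≤ Real.exp (2 * K * (s - σ)) *
      (heatSemigroup (s - σ) (fun y => |w σ (y + h) - w σ y|) x + 2 * L * K * |h| * (s - σ)) := by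
  have hσT : σ ∈ Set.Ico 0 T := ⟨hσ, hσs.trans_lt hs⟩
  have hcw := hw.continuous hσT
  set g : ℝ → ℝ := fun y => |w σ (y + h) - w σ y| with hgdef
  have hg : Continuous g := by fun_prop
  have hB0 := (hB σ ⟨le_rfl, hσs⟩).nonneg
  have hgB : ∀ y, |g y| ≤ 2 * B := by
    intro y
    simp only [hgdef, abs_abs]
    have h1 := abs_sub (w σ (y + h)) (w σ y)
    have h2 := (hB σ ⟨le_rfl, hσs⟩).1
    linarith [h2 (y + h), h2 y]
  have hg0 : ∀ y, 0 ≤ g y := fun y => abs_nonneg _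
  have hK0 : 0 ≤ K := (hw.nonneg σ hσT 0).trans (hK σ ⟨le_rfl, hσs⟩ 0)
  have hL0 : 0 ≤ L := by
    have := (abs_nonneg _).trans (hL 1 0)
    simpa using this
  have hY0 : ∀ r ∈ Set.Icc σ s, ∀ y, 0 ≤ Real.exp (2 * K * (r - σ)) *
      (heatSemigroup (r - σ) g y + 2 * L * K * |h| * (r - σ)) := by
    intro r hr y
    have h1 := heatSemigroup_nonneg hg0 (r - σ) y
    have h2 : 0 ≤ r - σ := by linarith [hr.1]
    positivity
  have key := parabolic_max_principle
    (D := fun r y => (w r (y + h) - w r y) - Real.exp (2 * K * (r - σ)) *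
      (heatSemigroup (r - σ) g y + 2 * L * K * |h| * (r - σ)))
    (a := σ) (b := s) (C := 2 * K) (B := 2 * B) (by positivity) ?_ ?_ ?_ ?_ s ⟨hσs, le_rfl⟩ x
  · simpa using key
  · have hcu := hw.continuousOn_uncurry hσ hs hB
    refine ContinuousOn.sub (ContinuousOn.sub ?_ hcu) (Continuous.continuousOn ?_)
    · exact hcu.comp (f := fun p : ℝ × ℝ => (p.1, p.2 + h)) (by fun_prop)
        (fun p hp => ⟨hp.1, trivial⟩)
    · have := continuous_heatSemigroup_shift (σ := σ) hg hgB
      fun_prop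
  · intro r hr y
    have h1 := hY0 r hr y
    have h2 := abs_le.1 ((hB r hr).1 y)
    have h3 := abs_le.1 ((hB r hr).1 (y + h))
    linarith
  · intro y
    simp only [sub_self, mul_zero, Real.exp_zero, one_mul, heatSemigroup_zero, add_zero, hgdef]
    linarith [le_abs_self (w σ (y + h) - w σ y)]
  · intro r hr y hpos
    have hrI : r ∈ Set.Icc σ s := ⟨hr.1.le, hr.2⟩
    have hrT : r ∈ Set.Ico 0 T := ⟨hσ.trans hr.1.le, hr.2.trans_lt hs⟩
    obtain ⟨d1, d2, h1, h2, h3⟩ := heatSemigroup_shift_heat_equation hr.1 hg hgB y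
    have he : HasDerivAt (fun r => Real.exp (2 * K * (r - σ)))
        (Real.exp (2 * K * (r - σ)) * (2 * K * 1)) r :=
      (((hasDerivAt_id r).sub_const σ).const_mul (2 * K)).exp
    have hlin : HasDerivAt (fun r => 2 * L * K * |h| * (r - σ)) (2 * L * K * |h| * 1) r :=
      ((hasDerivAt_id r).sub_const σ).const_mul (2 * L * K * |h|)
    refine ⟨_, _, _, ((hw.eqn r hrT (y + h)).sub (hw.eqn r hrT y)).sub (he.mul (h1.add hlin)),
      fun z => (((hw.hasDerivAt_space hrT (z + h)).comp_add_const z h).sub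
        (hw.hasDerivAt_space hrT z)).sub (((h2 z).add_const _).const_mul _),
      (((hw.hasDerivAt_space_space hrT (y + h)).comp_add_const y h).sub
        (hw.hasDerivAt_space_space hrT y)).sub (h3.const_mul _), ?_⟩
    have hY := hY0 r hrI y
    have hE1 : 1 ≤ Real.exp (2 * K * (r - σ)) := by
      apply Real.one_le_exp
      have : 0 ≤ r - σ := by linarith [hr.1]
      positivity
    set E := Real.exp (2 * K * (r - σ)) with hE
    set Z := heatSemigroup (r - σ) g y
    have hw1 := hw.nonneg r hrT (y + h)
    have hw2 := hw.nonneg r hrT y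
    have hk1 := hK r hrI (y + h)
    have hk2 := hK r hrI y
    set p := w r (y + h)
    set q := w r y
    have hpq : 0 < p - q := by linarith
    have e1 : (p + q) * (p - q) ≤ 2 * K * (p - q) :=
      mul_le_mul_of_nonneg_right (by linarith) hpq.le
    have e2 : -(f (y + h) - f y) * p ≤ L * |h| * K := by
      have i1 := hL (y + h) y
      rw [add_sub_cancel_left] at i1
      have i2 : -(f (y + h) - f y) ≤ L * |h| := (neg_le_abs _).trans i1
      exact (mul_le_mul_of_nonneg_right i2 hw1).trans
        (mul_le_mul_of_nonneg_left hk1 (by positivity))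
    have e3 : 0 ≤ f y * (p - q) := mul_nonneg (hf y) hpq.le
    have e4 : 2 * L * K * |h| ≤ E * (2 * L * K * |h|) := le_mul_of_one_le_left (by positivity) hE1
    nlinarith

/-- The solution differs from the heat flow at most linearly in time. -/
lemma IsNonnegSolution.abs_sub_heatSemigroup_le (hw : IsNonnegSolution f T w) {F : ℝ}
    (hf : ∀ x, 0 ≤ f x) (hF : ∀ x, f x ≤ F) {σ s B : ℝ} (hσ : 0 ≤ σ) (hσs : σ ≤ s) (hs : s < T)
    (hB : ∀ r ∈ Set.Icc σ s, BoundedLip B (w r)) (x : ℝ) :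
    |w s x - heatSemigroup (s - σ) (w σ) x| ≤ (2 * F * B + B ^ 2) * (s - σ) := by
  have hσT : σ ∈ Set.Ico 0 T := ⟨hσ, hσs.trans_lt hs⟩
  have hF0 : 0 ≤ F := (hf 0).trans (hF 0)
  have hg := hw.continuous hσT
  have hgB := (hB σ ⟨le_rfl, hσs⟩).1
  have hB0 := (hB σ ⟨le_rfl, hσs⟩).nonneg
  have hg0 := hw.nonneg σ hσT
  have key : ∀ c : ℝ, |c| = 1 →
      c * (w s x - heatSemigroup (s - σ) (w σ) x) ≤ (2 * F * B + B ^ 2) * (s - σ) := by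
    intro c hc
    have key := parabolic_max_principle
      (D := fun r y => c * (w r y - heatSemigroup (r - σ) (w σ) y) -
        (2 * F * B + B ^ 2) * (r - σ))
      (a := σ) (b := s) (C := 0) (B := 2 * B) le_rfl ?_ ?_ ?_ ?_ s ⟨hσs, le_rfl⟩ x
    · simpa using key
    · refine ContinuousOn.sub (ContinuousOn.mul (by fun_prop)
        ((hw.continuousOn_uncurry hσ hs hB).sub
          (continuous_heatSemigroup_shift hg hgB).continuousOn)) (by fun_prop)
    · intro r hr y
      have h1 : c * (w r y - heatSemigroup (r - σ) (w σ) y) ≤ 2 * B := by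
        refine (le_abs_self _).trans ?_
        rw [abs_mul, hc, one_mul]
        refine (abs_sub _ _).trans ?_
        linarith [(hB r hr).1 y, abs_heatSemigroup_le hgB (r - σ) y]
      have h2 : 0 ≤ (2 * F * B + B ^ 2) * (r - σ) :=
        mul_nonneg (by positivity) (by linarith [hr.1])
      linarith
    · intro y
      simp [heatSemigroup_zero]
    · intro r hr y hpos
      have hrI : r ∈ Set.Icc σ s := ⟨hr.1.le, hr.2⟩
      have hrT : r ∈ Set.Ico 0 T := ⟨hσ.trans hr.1.le, hr.2.trans_lt hs⟩
      obtain ⟨d1, d2, h1, h2, h3⟩ := heatSemigroup_shift_heat_equation hr.1 hg hgB y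
      refine ⟨_, _, _, (((hw.eqn r hrT y).sub h1).const_mul c).sub
          (((hasDerivAt_id r).sub_const σ).const_mul _),
        fun z => (((hw.hasDerivAt_space hrT z).sub (h2 z)).const_mul c).sub_const _,
        ((hw.hasDerivAt_space_space hrT y).sub h3).const_mul c, ?_⟩
      have e1 : c * (-2 * f y * w r y + w r y ^ 2) ≤ 2 * F * B + B ^ 2 := by
        refine (le_abs_self _).trans ?_
        rw [abs_mul, hc, one_mul]
        refine (abs_add_le _ _).trans ?_
        have i1 := (hB r hrI).1 y
        have i2 : |-2 * f y * w r y| = 2 * f y * |w r y| := by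
          rw [abs_mul, abs_mul, abs_of_nonneg (hf y)]; norm_num
        have i3 : |w r y ^ 2| = |w r y| ^ 2 := by rw [abs_pow]
        rw [i2, i3]
        have := hF y
        have := hf y
        gcongr
      linarith
  rw [abs_le]
  have k1 := key 1 (by norm_num)
  have k2 := key (-1) (by norm_num)
  constructor <;> linarith

end Comparison

/-- Cousin-type induction on intervals: a transitive relation between endpoints that holds on all
short intervals around each point holds on every interval. -/
lemma interval_induction {Q : ℝ → ℝ → Prop}
    (trans : ∀ p q r, p ≤ q → q ≤ r → Q p q → Q q r → Q p r)
    (loc : ∀ z, ∃ δ > 0, ∀ p q, p ≤ z → z ≤ q → q - p < δ → Q p q) {p q : ℝ} (hpq : p ≤ q) :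
    Q p q := by
  set S : Set ℝ := {c | c ∈ Set.Icc p q ∧ Q p c} with hS
  have hrefl : Q p p := by
    obtain ⟨δ, hδ, h⟩ := loc p
    exact h p p le_rfl le_rfl (by simpa using hδ)
  have hpS : p ∈ S := ⟨⟨le_rfl, hpq⟩, hrefl⟩
  have hbdd : BddAbove S := ⟨q, fun c hc => hc.1.2⟩
  set c := sSup S with hc
  have hpc : p ≤ c := le_csSup hbdd hpS
  have hcq : c ≤ q := csSup_le ⟨p, hpS⟩ fun c hc => hc.1.2
  obtain ⟨δ, hδ, hloc⟩ := loc c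
  obtain ⟨d, hdS, hd⟩ := exists_lt_of_lt_csSup ⟨p, hpS⟩ (show c - δ / 2 < sSup S by linarith)
  have hdc : d ≤ c := le_csSup hbdd hdS
  set e := min q (c + δ / 4) with he
  have hce : c ≤ e := le_min hcq (by linarith)
  have hec : e ≤ c + δ / 4 := min_le_right _ _
  have hQ : Q p e := trans p d e hdS.1.1 (hdc.trans hce) hdS.2
    (hloc d e hdc hce (by linarith))
  have heS : e ∈ S := ⟨⟨hpc.trans hce, min_le_left _ _⟩, hQ⟩
  have hle : e ≤ c := le_csSup hbdd heS
  rcases min_choice q (c + δ / 4) with h | h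
  · rw [← he] at h
    rwa [h] at hQ
  · rw [← he] at h; linarith

section Gap

variable {f : ℝ → ℝ} {T : ℝ} {w : ℝ → ℝ → ℝ} {F a b : ℝ}

lemma IsNonnegSolution.heatSemigroup_le_of_gap (hw : IsNonnegSolution f T w)
    (hf : ∀ x, 0 ≤ f x) (hF : ∀ x, f x ≤ F) (ha : 0 ≤ a) (hb : b < T) (hab : b - a ≤ 1)
    (hloc : ∀ σ s, a < σ → s < b → ∃ B, ∀ r ∈ Set.Icc σ s, BoundedLip B (w r))
    {σ s : ℝ} (hσ : a < σ) (hσs : σ < s) (hs : s < b) (x : ℝ) :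
    heatSemigroup (s - σ) (w σ) x ≤ Real.exp (2 * F) * w s x := by
  obtain ⟨B, hB⟩ := hloc σ s hσ hs
  have h := hw.heatSemigroup_le hf hF (ha.trans hσ.le) hσs.le (hs.trans hb) hB x
  have hF0 : 0 ≤ F := (hf 0).trans (hF 0)
  have hS := heatSemigroup_nonneg (hw.nonneg σ ⟨ha.trans hσ.le, hσs.trans (hs.trans hb)⟩) (s - σ) x
  have h1 : Real.exp (-2 * F) ≤ Real.exp (-2 * F * (s - σ)) := by
    apply Real.exp_le_exp.2
    nlinarith
  have h2 : Real.exp (-2 * F) * heatSemigroup (s - σ) (w σ) x ≤ w s x :=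
    (mul_le_mul_of_nonneg_right h1 hS).trans h
  have h3 : Real.exp (2 * F) * Real.exp (-2 * F) = 1 := by
    rw [← Real.exp_add]; simp
  calc heatSemigroup (s - σ) (w σ) x
      = Real.exp (2 * F) * (Real.exp (-2 * F) * heatSemigroup (s - σ) (w σ) x) := by
        rw [← mul_assoc, h3, one_mul]
    _ ≤ _ := by gcongr

lemma IsNonnegSolution.heatSemigroup_le_of_gap_right (hw : IsNonnegSolution f T w)
    (hf : ∀ x, 0 ≤ f x) (hF : ∀ x, f x ≤ F) (ha : 0 ≤ a) (hb : b < T) (hab : b - a ≤ 1)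
    (hloc : ∀ σ s, a < σ → s < b → ∃ B, ∀ r ∈ Set.Icc σ s, BoundedLip B (w r))
    {σ : ℝ} (hσ : a < σ) (hσb : σ < b) (x : ℝ) :
    heatSemigroup (b - σ) (w σ) x ≤ Real.exp (2 * F) * w b x := by
  have hσT : σ ∈ Set.Ico 0 T := ⟨ha.trans hσ.le, hσb.trans hb⟩
  obtain ⟨B, hB⟩ := hw.bounded σ hσT
  have h1 : Tendsto (fun s => heatSemigroup (s - σ) (w σ) x) (nhdsWithin b (Set.Iio b))
      (nhds (heatSemigroup (b - σ) (w σ) x)) := by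
    have hc : Continuous fun s => heatSemigroup (s - σ) (w σ) x :=
      (continuous_heatSemigroup (hw.continuous hσT) hB.1).comp
        (by fun_prop : Continuous fun s : ℝ => (s - σ, x))
    exact (hc.tendsto b).mono_left nhdsWithin_le_nhds
  have h2 : Tendsto (fun s => Real.exp (2 * F) * w s x) (nhdsWithin b (Set.Iio b))
      (nhds (Real.exp (2 * F) * w b x)) :=
    (((hw.continuousAt_time ⟨hσT.1.trans hσb.le, hb⟩ x).tendsto).mono_left
      nhdsWithin_le_nhds).const_mul _
  refine le_of_tendsto_of_tendsto h1 h2 ?_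
  filter_upwards [Ioo_mem_nhdsLT hσb] with s hs
  exact hw.heatSemigroup_le_of_gap hf hF ha hb hab hloc hσ hs.1 hs.2 x

/-- Lower bound for the heat kernel on the parabolic scale. -/
lemma one_le_mul_heatKernel {τ ℓ z : ℝ} (hτ : ℓ ^ 2 / 2 ≤ τ) (hτ' : τ ≤ ℓ ^ 2) (hℓ : 0 < ℓ)
    (hz : |z| ≤ ℓ) : 1 ≤ 8 * ℓ * heatKernel τ z := by
  have hτ0 : 0 < τ := by nlinarith
  have h1 : √(4 * Real.pi * τ) ≤ 4 * ℓ := by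
    rw [Real.sqrt_le_left (by positivity)]
    nlinarith [Real.pi_lt_four, Real.pi_pos]
  have h2 : (1 : ℝ) / 2 ≤ Real.exp (-z ^ 2 / (4 * τ)) := by
    have h3 : z ^ 2 ≤ ℓ ^ 2 := sq_le_sq' (abs_le.1 hz).1 (abs_le.1 hz).2
    have h4 : -(1 / 2) ≤ -z ^ 2 / (4 * τ) := by
      rw [le_div_iff₀ (by positivity)]
      nlinarith
    linarith [Real.add_one_le_exp (-z ^ 2 / (4 * τ))]
  have h5 : (4 * ℓ)⁻¹ ≤ (√(4 * Real.pi * τ))⁻¹ := by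
    have : 0 < √(4 * Real.pi * τ) := Real.sqrt_pos.2 (by positivity)
    gcongr
  calc (1 : ℝ) = 8 * ℓ * ((4 * ℓ)⁻¹ * (1 / 2)) := by field_simp; norm_num
    _ ≤ 8 * ℓ * heatKernel τ z := by
      unfold heatKernel
      gcongr

/-- Near the left end of a gap, the mass of `w σ` on a short interval around `z` is controlled by
the values of `w` above `z`. -/
lemma IsNonnegSolution.exists_integral_le_of_gap (hw : IsNonnegSolution f T w)
    (hf : ∀ x, 0 ≤ f x) (hF : ∀ x, f x ≤ F) (ha : 0 ≤ a) (hab' : a < b) (hb : b < T)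
    (hab : b - a ≤ 1)
    (hloc : ∀ σ s, a < σ → s < b → ∃ B, ∀ r ∈ Set.Icc σ s, BoundedLip B (w r))
    {N : ℝ} (hN : ∀ x, w a x ≤ N) (z : ℝ) :
    ∃ δ > 0, ∀ p q, p ≤ z → z ≤ q → q - p < δ → ∀ᶠ σ in nhdsWithin a (Set.Ioi a),
      ∫ y in p..q, w σ y ≤ 8 * (Real.exp (2 * F) * (N + 1)) * (q - p) := by
  have hcont := hw.continuousAt_time (s := a) ⟨ha, hab'.trans hb⟩ z
  have hev : ∀ᶠ r in nhds a, w r z < N + 1 :=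
    hcont.eventually (gt_mem_nhds (by linarith [hN z]))
  obtain ⟨ε, hε, hball⟩ := Metric.eventually_nhds_iff.1 hev
  refine ⟨min 1 (min ε (b - a)), by simp [hε, hab'], fun p q hp hq hpq => ?_⟩
  rcases (hp.trans hq).eq_or_lt with rfl | hlt
  · simp
  set ℓ := q - p with hℓdef
  have hℓ : 0 < ℓ := sub_pos.2 hlt
  have hℓ1 : ℓ < 1 := hpq.trans_le (min_le_left _ _)
  have hℓε : ℓ < ε := hpq.trans_le ((min_le_right _ _).trans (min_le_left _ _))
  have hℓb : ℓ < b - a := hpq.trans_le ((min_le_right _ _).trans (min_le_right _ _))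
  have hsq : ℓ ^ 2 ≤ ℓ := by nlinarith
  have hsq0 : 0 < ℓ ^ 2 := by positivity
  have hval : w (a + ℓ ^ 2) z ≤ N + 1 := by
    refine (hball ?_).le
    rw [Real.dist_eq, add_sub_cancel_left, abs_of_pos hsq0]
    linarith
  filter_upwards [Ioo_mem_nhdsGT (show a < a + ℓ ^ 2 / 2 by linarith)] with σ hσ
  have hσT : σ ∈ Set.Ico 0 T := ⟨ha.trans hσ.1.le, by linarith [hσ.2]⟩
  obtain ⟨B, hB⟩ := hw.bounded σ hσT
  have hc := hw.continuous hσT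
  have h1 := hw.heatSemigroup_le_of_gap hf hF ha hb hab hloc hσ.1
    (show σ < a + ℓ ^ 2 by linarith [hσ.2]) (by linarith) z
  have hτ : 0 < a + ℓ ^ 2 - σ := by linarith [hσ.2]
  rw [heatSemigroup_eq_integral_heatKernel hτ hc] at h1
  have hkInt := integrable_heatKernel_mul hτ hc hB.1 z
  have h2 : ∫ y in Set.Ioc p q, heatKernel (a + ℓ ^ 2 - σ) (y - z) * w σ y ≤
      ∫ y, heatKernel (a + ℓ ^ 2 - σ) (y - z) * w σ y :=
    setIntegral_le_integral hkInt
      (Eventually.of_forall fun y => mul_nonneg (heatKernel_nonneg _ _) (hw.nonneg σ hσT y))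
  have h3 : ∫ y in Set.Ioc p q, w σ y ≤
      ∫ y in Set.Ioc p q, 8 * ℓ * (heatKernel (a + ℓ ^ 2 - σ) (y - z) * w σ y) := by
    refine setIntegral_mono_on ?_ (hkInt.const_mul _).integrableOn measurableSet_Ioc fun y hy => ?_
    · exact (hc.integrableOn_Icc).mono_set Set.Ioc_subset_Icc_self
    · have := one_le_mul_heatKernel (τ := a + ℓ ^ 2 - σ) (ℓ := ℓ) (z := y - z)
        (by linarith [hσ.2]) (by linarith [hσ.1]) hℓ
        (abs_le.2 ⟨by linarith [hy.1], by linarith [hy.2]⟩)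
      calc w σ y = 1 * w σ y := (one_mul _).symm
        _ ≤ 8 * ℓ * heatKernel (a + ℓ ^ 2 - σ) (y - z) * w σ y :=
          mul_le_mul_of_nonneg_right this (hw.nonneg σ hσT y)
        _ = _ := by ring
  rw [integral_const_mul] at h3
  rw [intervalIntegral.integral_of_le hlt.le]
  calc _ ≤ 8 * ℓ * (Real.exp (2 * F) * w (a + ℓ ^ 2) z) :=
        h3.trans (mul_le_mul_of_nonneg_left (h2.trans h1) (by positivity))
    _ ≤ 8 * ℓ * (Real.exp (2 * F) * (N + 1)) := by gcongr
    _ = _ := by ring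

/-- The local mass bound, integrated against a positive continuous weight. -/
lemma IsNonnegSolution.eventually_integral_mul_le_of_gap (hw : IsNonnegSolution f T w)
    (hf : ∀ x, 0 ≤ f x) (hF : ∀ x, f x ≤ F) (ha : 0 ≤ a) (hab' : a < b) (hb : b < T)
    (hab : b - a ≤ 1)
    (hloc : ∀ σ s, a < σ → s < b → ∃ B, ∀ r ∈ Set.Icc σ s, BoundedLip B (w r))
    {N : ℝ} (hN : ∀ x, w a x ≤ N) {g : ℝ → ℝ} (hg : Continuous g) (hg0 : ∀ x, 0 < g x)
    {p q : ℝ} (hpq : p ≤ q) :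
    ∀ᶠ σ in nhdsWithin a (Set.Ioi a),
      ∫ y in p..q, g y * w σ y ≤ 16 * (Real.exp (2 * F) * (N + 1)) * ∫ y in p..q, g y := by
  have hmem : ∀ᶠ σ in nhdsWithin a (Set.Ioi a), σ ∈ Set.Ico 0 T := by
    filter_upwards [Ioo_mem_nhdsGT (hab'.trans hb)] with σ hσ
    exact ⟨ha.trans hσ.1.le, hσ.2⟩
  have hN0 : 0 ≤ N := (hw.nonneg a ⟨ha, hab'.trans hb⟩ 0).trans (hN 0)
  set K := Real.exp (2 * F) * (N + 1) with hK
  have hK0 : 0 ≤ K := by positivity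
  refine interval_induction (Q := fun p q => ∀ᶠ σ in nhdsWithin a (Set.Ioi a),
      ∫ y in p..q, g y * w σ y ≤ 16 * K * ∫ y in p..q, g y) ?_ ?_ hpq
  · intro p q r _ _ h1 h2
    filter_upwards [h1, h2, hmem] with σ h1 h2 hσ
    have hc : Continuous fun y => g y * w σ y := hg.mul (hw.continuous hσ)
    rw [← intervalIntegral.integral_add_adjacent_intervals (hc.intervalIntegrable p q)
      (hc.intervalIntegrable q r), ← intervalIntegral.integral_add_adjacent_intervals
      (hg.intervalIntegrable p q) (hg.intervalIntegrable q r)]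
    linarith
  · intro z
    obtain ⟨δ₁, hδ₁, h1⟩ := hw.exists_integral_le_of_gap hf hF ha hab' hb hab hloc hN z
    have hup : ∀ᶠ y in nhds z, g y < 3 / 2 * g z :=
      hg.continuousAt.eventually (gt_mem_nhds (by linarith [hg0 z]))
    have hlo : ∀ᶠ y in nhds z, 3 / 4 * g z < g y :=
      hg.continuousAt.eventually (lt_mem_nhds (by linarith [hg0 z]))
    obtain ⟨δ₂, hδ₂, h2⟩ := Metric.eventually_nhds_iff.1 (hup.and hlo)
    refine ⟨min δ₁ δ₂, lt_min hδ₁ hδ₂, fun p q hp hq hlt => ?_⟩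
    have hnear : ∀ y ∈ Set.Icc p q, g y < 3 / 2 * g z ∧ 3 / 4 * g z < g y := by
      intro y hy
      apply h2
      have := hlt.trans_le (min_le_right _ _)
      rw [Real.dist_eq, abs_lt]
      constructor <;> linarith [hy.1, hy.2]
    have hpq := hp.trans hq
    filter_upwards [h1 p q hp hq (hlt.trans_le (min_le_left _ _)), hmem] with σ h3 hσ
    have hc := hw.continuous hσ
    have h4 : ∫ y in p..q, g y * w σ y ≤ ∫ y in p..q, 3 / 2 * g z * w σ y :=
      intervalIntegral.integral_mono_on hpq ((hg.mul hc).intervalIntegrable p q)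
        ((hc.const_mul _).intervalIntegrable p q) fun y hy =>
          mul_le_mul_of_nonneg_right (hnear y hy).1.le (hw.nonneg σ hσ y)
    have h5 : ∫ _ in p..q, 3 / 4 * g z ≤ ∫ y in p..q, g y :=
      intervalIntegral.integral_mono_on hpq intervalIntegrable_const (hg.intervalIntegrable p q)
        fun y hy => (hnear y hy).2.le
    rw [intervalIntegral.integral_const_mul] at h4
    rw [intervalIntegral.integral_const, smul_eq_mul] at h5
    calc _ ≤ _ := h4
      _ ≤ 3 / 2 * g z * (8 * K * (q - p)) :=
        mul_le_mul_of_nonneg_left h3 (by linarith [hg0 z])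
      _ = 16 * K * ((q - p) * (3 / 4 * g z)) := by ring
      _ ≤ _ := by gcongr

/-- Far from the origin, the heat kernel is dominated by any wider one of width at most one. -/
lemma exists_heatKernel_le {τ β : ℝ} (hτ : 0 < τ) (hτβ : τ < β) :
    ∃ R, 0 < R ∧ ∀ β', β ≤ β' → β' ≤ 1 → ∀ z, R ≤ |z| → heatKernel τ z ≤ heatKernel β' z := by
  have hβ : 0 < β := hτ.trans hτβ
  set c : ℝ := 1 / (4 * τ) - 1 / (4 * β) with hc
  have hc0 : 0 < c := by
    rw [hc, sub_pos]
    gcongr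
  have hsτ : 0 < √τ := Real.sqrt_pos.2 hτ
  refine ⟨√((√τ)⁻¹ / c), Real.sqrt_pos.2 (by positivity), fun β' hβ' h1 z hz => ?_⟩
  have hβ'0 : 0 < β' := hβ.trans_le hβ'
  have hz2 : (√τ)⁻¹ / c ≤ z ^ 2 := by
    rw [← sq_abs]
    exact (Real.sqrt_le_left (abs_nonneg z)).1 hz
  have h2 : (√τ)⁻¹ ≤ Real.exp (c * z ^ 2) := by
    have := Real.add_one_le_exp (c * z ^ 2)
    rw [div_le_iff₀ hc0] at hz2
    linarith
  have h3 : Real.exp (c * z ^ 2) * Real.exp (-z ^ 2 / (4 * τ)) ≤ Real.exp (-z ^ 2 / (4 * β')) := by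
    rw [← Real.exp_add]
    apply Real.exp_le_exp.2
    have h4 : z ^ 2 / (4 * β') ≤ z ^ 2 / (4 * β) := by gcongr
    rw [hc, neg_div, neg_div]
    have : (1 / (4 * τ) - 1 / (4 * β)) * z ^ 2 = z ^ 2 / (4 * τ) - z ^ 2 / (4 * β) := by ring
    linarith
  unfold heatKernel
  rw [Real.sqrt_mul (by positivity) τ, Real.sqrt_mul (by positivity) β', mul_inv, mul_inv,
    mul_assoc, mul_assoc]
  have h5 : 1 ≤ (√β')⁻¹ := by
    rw [one_le_inv₀ (Real.sqrt_pos.2 hβ'0)]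
    exact Real.sqrt_le_one.2 h1
  have h6 : (√τ)⁻¹ * Real.exp (-z ^ 2 / (4 * τ)) ≤ Real.exp (-z ^ 2 / (4 * β')) :=
    (mul_le_mul_of_nonneg_right h2 (Real.exp_pos _).le).trans h3
  have h7 := mul_le_mul_of_nonneg_right h5 (Real.exp_pos (-z ^ 2 / (4 * β'))).le
  rw [one_mul] at h7
  exact mul_le_mul_of_nonneg_left (h6.trans h7) (by positivity)

lemma heatSemigroup_le_two_mul {τ β K : ℝ} (hβ : 0 < β) (hβτ : β / 2 ≤ τ) (hτβ : τ ≤ β)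
    {g : ℝ → ℝ} (hg : Continuous g) (hK : ∀ y, |g y| ≤ K) (h0 : ∀ y, 0 ≤ g y) (x : ℝ) :
    heatSemigroup τ g x ≤ 2 * heatSemigroup β g x := by
  have hτ : 0 < τ := by linarith
  refine (heatSemigroup_le_sqrt_mul hτ hτβ hg hK h0 x).trans ?_
  refine mul_le_mul_of_nonneg_right ?_ (heatSemigroup_nonneg h0 _ _)
  rw [Real.sqrt_le_left (by norm_num), div_le_iff₀ hτ]
  linarith

lemma IsNonnegSolution.eventually_heatSemigroup_le_of_gap (hw : IsNonnegSolution f T w)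
    (hf : ∀ x, 0 ≤ f x) (hF : ∀ x, f x ≤ F) (ha : 0 ≤ a) (hb : b < T) (hab : b - a ≤ 1)
    (hloc : ∀ σ s, a < σ → s < b → ∃ B, ∀ r ∈ Set.Icc σ s, BoundedLip B (w r))
    {N : ℝ} (hNa : ∀ x, w a x ≤ N) (hNb : ∀ x, w b x ≤ N) {s : ℝ} (has : a < s) (hsb : s < b)
    (x : ℝ) :
    ∀ᶠ σ in nhdsWithin a (Set.Ioi a),
      heatSemigroup (s - a) (w σ) x ≤ 17 * (Real.exp (2 * F) * (N + 1)) := by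
  have hτ : 0 < s - a := sub_pos.2 has
  have hab' : a < b := has.trans hsb
  have hN0 : 0 ≤ N := (hw.nonneg a ⟨ha, hab'.trans hb⟩ 0).trans (hNa 0)
  obtain ⟨R, hR, hker⟩ := exists_heatKernel_le hτ (show s - a < (s + b) / 2 - a by linarith)
  have hcen := hw.eventually_integral_mul_le_of_gap hf hF ha hab' hb hab hloc hNa
    (g := fun y => heatKernel (s - a) (y - x))
    ((continuous_heatKernel _).comp (by fun_prop)) (fun y => heatKernel_pos hτ _)
    (show x - R ≤ x + R by linarith)
  filter_upwards [hcen, Ioo_mem_nhdsGT (show a < a + (b - s) / 2 by linarith)] with σ h1 hσ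
  have hσT : σ ∈ Set.Ico 0 T := ⟨ha.trans hσ.1.le, by linarith [hσ.2]⟩
  obtain ⟨B, hB⟩ := hw.bounded σ hσT
  have hc := hw.continuous hσT
  have hβ : 0 < b - σ := by linarith [hσ.2]
  have hi1 := integrable_heatKernel_mul hτ hc hB.1 x
  have hi2 := integrable_heatKernel_mul hβ hc hB.1 x
  set I : Set ℝ := Set.Ioc (x - R) (x + R) with hI
  have hIm : MeasurableSet I := measurableSet_Ioc
  rw [intervalIntegral.integral_of_le (by linarith), intervalIntegral.integral_of_le (by linarith),
    ← hI] at h1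
  have h2 : ∫ y in I, heatKernel (s - a) (y - x) ≤ 1 := by
    rw [← integral_heatKernel hτ x]
    exact setIntegral_le_integral (integrable_heatKernel hτ x)
      (Eventually.of_forall fun y => heatKernel_nonneg _ _)
  have h3 : ∫ y in Iᶜ, heatKernel (s - a) (y - x) * w σ y ≤
      ∫ y in Iᶜ, heatKernel (b - σ) (y - x) * w σ y := by
    refine setIntegral_mono_on hi1.integrableOn hi2.integrableOn hIm.compl fun y hy => ?_
    refine mul_le_mul_of_nonneg_right (hker _ (by linarith [hσ.2]) (by linarith [hσ.1]) _ ?_)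
      (hw.nonneg σ hσT y)
    by_contra! hlt
    rw [abs_lt] at hlt
    exact hy ⟨by linarith [hlt.1], by linarith [hlt.2]⟩
  have h4 : ∫ y in Iᶜ, heatKernel (b - σ) (y - x) * w σ y ≤ heatSemigroup (b - σ) (w σ) x := by
    rw [heatSemigroup_eq_integral_heatKernel hβ hc]
    exact setIntegral_le_integral hi2
      (Eventually.of_forall fun y => mul_nonneg (heatKernel_nonneg _ _) (hw.nonneg σ hσT y))
  have h5 := hw.heatSemigroup_le_of_gap_right hf hF ha hb hab hloc hσ.1 (by linarith [hσ.2]) x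
  have h6 : Real.exp (2 * F) * w b x ≤ Real.exp (2 * F) * (N + 1) := by
    gcongr
    linarith [hNb x]
  rw [heatSemigroup_eq_integral_heatKernel hτ hc, ← integral_add_compl hIm hi1]
  have h7 : 16 * (Real.exp (2 * F) * (N + 1)) * ∫ y in I, heatKernel (s - a) (y - x) ≤
      16 * (Real.exp (2 * F) * (N + 1)) := mul_le_of_le_one_right (by positivity) h2
  linarith

/-- Pointwise bound inside a gap, depending only on the bounds at its two ends. -/
lemma IsNonnegSolution.le_of_gap (hw : IsNonnegSolution f T w)
    (hf : ∀ x, 0 ≤ f x) (hF : ∀ x, f x ≤ F) (ha : 0 ≤ a) (hb : b < T) (hab : b - a ≤ 1)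
    (hloc : ∀ σ s, a < σ → s < b → ∃ B, ∀ r ∈ Set.Icc σ s, BoundedLip B (w r))
    {N : ℝ} (hNa : ∀ x, w a x ≤ N) (hNb : ∀ x, w b x ≤ N) {κ : ℝ}
    (hκ : κ = Real.exp (2 * F) * (N + 1)) {s : ℝ} (has : a < s) (hsb : s < b) (x : ℝ) :
    w s x ≤ 68 * κ + 8 * κ ^ 2 := by
  have hF0 : 0 ≤ F := (hf 0).trans (hF 0)
  have hN0 : 0 ≤ N := (hw.nonneg a ⟨ha, (has.trans hsb).trans hb⟩ 0).trans (hNa 0)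
  have hκ1 : 0 < κ := by rw [hκ]; positivity
  have hright : ∀ σ, a < σ → σ < b → ∀ y, heatSemigroup (b - σ) (w σ) y ≤ κ := by
    intro σ h1 h2 y
    refine (hw.heatSemigroup_le_of_gap_right hf hF ha hb hab hloc h1 h2 y).trans ?_
    rw [hκ]
    gcongr
    linarith [hNb y]
  have hdecay : ∀ σ, a < σ → σ < b → ∀ τ, 0 < τ → τ ≤ b - σ → ∀ y,
      heatSemigroup τ (w σ) y ≤ κ / √τ := by
    intro σ h1 h2 τ hτ hτb y
    have hσT : σ ∈ Set.Ico 0 T := ⟨ha.trans h1.le, h2.trans hb⟩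
    obtain ⟨B, hB⟩ := hw.bounded σ hσT
    refine (heatSemigroup_le_sqrt_mul hτ hτb (hw.continuous hσT) hB.1 (hw.nonneg σ hσT) y).trans ?_
    have h3 : √((b - σ) / τ) ≤ 1 / √τ := by
      rw [← Real.sqrt_one, ← Real.sqrt_div (by norm_num)]
      apply Real.sqrt_le_sqrt
      gcongr
      linarith
    calc _ ≤ 1 / √τ * κ := mul_le_mul h3 (hright σ h1 h2 y)
          (heatSemigroup_nonneg (hw.nonneg σ hσT) _ _) (by positivity)
      _ = κ / √τ := by ring
  set τ₀ : ℝ := (1 / (4 * κ)) ^ 2 with hτ₀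
  have hτ₀pos : 0 < τ₀ := by positivity
  have hsqrt : √τ₀ = 1 / (4 * κ) := Real.sqrt_sq (by positivity)
  have hcmp : ∀ σ, a < σ → σ < s → s - σ ≤ τ₀ → w s x ≤ 2 * heatSemigroup (s - σ) (w σ) x := by
    intro σ h1 h2 h3
    obtain ⟨B, hB⟩ := hloc σ s h1 hsb
    refine hw.le_two_mul_heatSemigroup hf (ha.trans h1.le) h2.le (hsb.trans hb) hB hκ1.le
      (fun τ hτ hτs y => hdecay σ h1 (h2.trans hsb) τ hτ (by linarith) y) ?_ x
    calc 4 * κ * √(s - σ) ≤ 4 * κ * √τ₀ := by gcongr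
      _ = 1 := by rw [hsqrt]; field_simp
  rcases lt_or_ge τ₀ (s - a) with hlong | hshort
  · have h1 := hcmp (s - τ₀) (by linarith) (by linarith) (by linarith)
    have h2 := hdecay (s - τ₀) (by linarith) (by linarith) τ₀ hτ₀pos (by linarith) x
    rw [sub_sub_cancel] at h1
    rw [hsqrt] at h2
    have h3 : κ / (1 / (4 * κ)) = 4 * κ ^ 2 := by field_simp
    rw [h3] at h2
    linarith
  · have hev := hw.eventually_heatSemigroup_le_of_gap hf hF ha hb hab hloc hNa hNb has hsb x
    obtain ⟨σ, h1, hσ⟩ := (hev.and (Ioo_mem_nhdsGT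
      (show a < a + (s - a) / 2 by linarith))).exists
    have hσT : σ ∈ Set.Ico 0 T := ⟨ha.trans hσ.1.le, by linarith [hσ.2]⟩
    obtain ⟨B, hB⟩ := hw.bounded σ hσT
    have h2 := hcmp σ hσ.1 (by linarith [hσ.2]) (by linarith [hσ.1])
    have h3 := heatSemigroup_le_two_mul (τ := s - σ) (sub_pos.2 has) (by linarith [hσ.2])
      (by linarith [hσ.1]) (hw.continuous hσT) hB.1 (hw.nonneg σ hσT) x
    rw [← hκ] at h1
    nlinarith

/-- Lipschitz bound inside a gap, depending only on the pointwise bound and on the Lipschitz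
bound at the left end. -/
lemma IsNonnegSolution.increment_le_of_gap (hw : IsNonnegSolution f T w)
    (hf : ∀ x, 0 ≤ f x) {L : ℝ} (hL : ∀ x y, |f x - f y| ≤ L * |x - y|) (ha : 0 ≤ a) (hb : b < T)
    (hab : b - a ≤ 1)
    (hloc : ∀ σ s, a < σ → s < b → ∃ B, ∀ r ∈ Set.Icc σ s, BoundedLip B (w r))
    {N K : ℝ} (hNa : BoundedLip N (w a)) (hK : ∀ s, a < s → s < b → ∀ x, w s x ≤ K)
    {s : ℝ} (has : a < s) (hsb : s < b) (h x : ℝ) :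
    w s (x + h) - w s x ≤ Real.exp (2 * K) * (2 * N + 2 * L * K) * |h| := by
  have hL0 : 0 ≤ L := by simpa using (abs_nonneg _).trans (hL 1 0)
  have hK0 : 0 ≤ K := (hw.nonneg s ⟨ha.trans has.le, hsb.trans hb⟩ 0).trans (hK s has hsb 0)
  have haT : a ∈ Set.Ico 0 T := ⟨ha, (has.trans hsb).trans hb⟩
  have hτ : 0 < s - a := sub_pos.2 has
  have hmem : ∀ᶠ σ in nhdsWithin a (Set.Ioi a), a < σ ∧ σ < a + (s - a) / 2 := by
    filter_upwards [Ioo_mem_nhdsGT (show a < a + (s - a) / 2 by linarith)] with σ hσ using hσ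
  have hT : ∀ σ, a < σ ∧ σ < a + (s - a) / 2 → σ ∈ Set.Ico 0 T := fun σ hσ =>
    ⟨ha.trans hσ.1.le, by linarith [hσ.2]⟩
  have habs : ∀ σ, a < σ ∧ σ < a + (s - a) / 2 → ∀ y, |w σ (y + h) - w σ y| ≤ K := by
    intro σ hσ y
    have h1 := hK σ hσ.1 (by linarith [hσ.2])
    have h2 := hw.nonneg σ (hT σ hσ)
    rw [abs_le]
    constructor <;> linarith [h1 y, h2 y, h1 (y + h), h2 (y + h)]
  have hlim : Tendsto (fun σ => ∫ y, heatKernel (s - a) (y - x) * |w σ (y + h) - w σ y|)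
      (nhdsWithin a (Set.Ioi a))
      (nhds (∫ y, heatKernel (s - a) (y - x) * |w a (y + h) - w a y|)) := by
    refine tendsto_integral_filter_of_dominated_convergence
      (fun y => heatKernel (s - a) (y - x) * K) ?_ ?_ ((integrable_heatKernel hτ x).mul_const K) ?_
    · filter_upwards [hmem] with σ hσ
      have hc := hw.continuous (hT σ hσ)
      have hk := continuous_heatKernel (s - a)
      exact (by fun_prop : Continuous _).aestronglyMeasurable
    · filter_upwards [hmem] with σ hσ
      refine Eventually.of_forall fun y => ?_
      rw [Real.norm_eq_abs, abs_mul, abs_abs, abs_of_nonneg (heatKernel_nonneg _ _)]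
      exact mul_le_mul_of_nonneg_left (habs σ hσ y) (heatKernel_nonneg _ _)
    · refine Eventually.of_forall fun y => ?_
      have h1 := hw.continuousAt_time haT y
      have h2 := hw.continuousAt_time haT (y + h)
      exact (((h2.sub h1).abs.tendsto).const_mul _).mono_left nhdsWithin_le_nhds
  have hlimle : ∫ y, heatKernel (s - a) (y - x) * |w a (y + h) - w a y| ≤ N * |h| := by
    have hc : Continuous fun y => |w a (y + h) - w a y| := by
      have := hw.continuous haT
      fun_prop
    rw [← heatSemigroup_eq_integral_heatKernel hτ hc]
    have hle : ∀ y, |w a (y + h) - w a y| ≤ N * |h| := fun y => by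
      simpa using hNa.2 (y + h) y
    exact HeatPairing.heatSemigroup_le hc (fun y => by rw [abs_abs]; exact hle y) hle _ _
  have hev : ∀ᶠ σ in nhdsWithin a (Set.Ioi a), w s (x + h) - w s x ≤
      Real.exp (2 * K) * (2 * (∫ y, heatKernel (s - a) (y - x) * |w σ (y + h) - w σ y|)
        + 2 * L * K * |h|) := by
    filter_upwards [hmem] with σ hσ
    have hσs : σ ≤ s := by linarith [hσ.2]
    obtain ⟨B, hB⟩ := hloc σ s hσ.1 hsb
    have h1 := hw.increment_le hf hL (ha.trans hσ.1.le) hσs (hsb.trans hb) hB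
      (fun r hr y => hK r (hσ.1.trans_le hr.1) (hr.2.trans_lt hsb) y) h x
    have hc : Continuous fun y => |w σ (y + h) - w σ y| := by
      have := hw.continuous (hT σ hσ)
      fun_prop
    have h2 := heatSemigroup_le_two_mul (τ := s - σ) hτ (by linarith [hσ.2])
      (by linarith [hσ.1]) hc (fun y => by rw [abs_abs]; exact habs σ hσ y)
      (fun y => abs_nonneg _) x
    rw [heatSemigroup_eq_integral_heatKernel hτ hc] at h2
    have h3 : Real.exp (2 * K * (s - σ)) ≤ Real.exp (2 * K) := by
      apply Real.exp_le_exp.2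
      nlinarith [hσ.1]
    have h4 := heatSemigroup_nonneg (fun y => abs_nonneg (w σ (y + h) - w σ y)) (s - σ) x
    have h5 : 2 * L * K * |h| * (s - σ) ≤ 2 * L * K * |h| :=
      mul_le_of_le_one_right (by positivity) (by linarith [hσ.1])
    have h6 : 0 ≤ 2 * L * K * |h| * (s - σ) := mul_nonneg (by positivity) (by linarith)
    refine h1.trans (mul_le_mul h3 (add_le_add h2 h5) (add_nonneg h4 h6) (Real.exp_pos _).le)
  have h7 := ge_of_tendsto (((hlim.const_mul 2).add_const (2 * L * K * |h|)).const_mul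
    (Real.exp (2 * K))) hev
  refine h7.trans ?_
  rw [mul_assoc (Real.exp (2 * K))]
  refine mul_le_mul_of_nonneg_left ?_ (Real.exp_pos _).le
  linarith

/-- The bounds inside a gap depend only on those at its two ends. -/
lemma IsNonnegSolution.exists_boundedLip_of_gap (hw : IsNonnegSolution f T w)
    (hf : ∀ x, 0 ≤ f x) (hF : ∀ x, f x ≤ F) {L : ℝ} (hL : ∀ x y, |f x - f y| ≤ L * |x - y|)
    (N : ℝ) : ∃ B', ∀ a b, 0 ≤ a → b < T → b - a ≤ 1 →
      (∀ σ s, a < σ → s < b → ∃ B, ∀ r ∈ Set.Icc σ s, BoundedLip B (w r)) →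
      BoundedLip N (w a) → BoundedLip N (w b) → ∀ s, a < s → s < b → BoundedLip B' (w s) := by
  set κ := Real.exp (2 * F) * (N + 1) with hκ
  set K := 68 * κ + 8 * κ ^ 2 with hKdef
  set M := Real.exp (2 * K) * (2 * N + 2 * L * K) with hM
  refine ⟨max K M, fun a b ha hb hab hloc hNa hNb s has hsb => ?_⟩
  have hK : ∀ s, a < s → s < b → ∀ x, w s x ≤ K := fun s h1 h2 x =>
    hw.le_of_gap hf hF ha hb hab hloc (fun x => (le_abs_self _).trans (hNa.1 x))
      (fun x => (le_abs_self _).trans (hNb.1 x)) hκ h1 h2 x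
  refine ⟨fun x => ?_, fun x y => ?_⟩
  · rw [abs_of_nonneg (hw.nonneg s ⟨ha.trans has.le, hsb.trans hb⟩ x)]
    exact (hK s has hsb x).trans (le_max_left _ _)
  · have h1 := hw.increment_le_of_gap hf hL ha hb hab hloc hNa hK has hsb (x - y) y
    have h2 := hw.increment_le_of_gap hf hL ha hb hab hloc hNa hK has hsb (y - x) x
    rw [add_sub_cancel] at h1 h2
    rw [abs_sub_comm y x] at h2
    have h3 : M * |x - y| ≤ max K M * |x - y| := by
      gcongr
      exact le_max_right _ _
    rw [abs_le]
    constructor <;> linarith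

end Gap

/-- The slices of `w` have a common bounded Lipschitz bound near time `s`. -/
def LocallyBoundedAt (T : ℝ) (w : ℝ → ℝ → ℝ) (s : ℝ) : Prop :=
  ∃ ε > 0, ∃ B, ∀ r ∈ Set.Ico (0 : ℝ) T, |r - s| < ε → BoundedLip B (w r)

section Baire

variable {f : ℝ → ℝ} {T : ℝ} {w : ℝ → ℝ → ℝ}

lemma isOpen_locallyBoundedAt : IsOpen {s | LocallyBoundedAt T w s} := by
  rw [Metric.isOpen_iff]
  rintro s ⟨ε, hε, B, hB⟩
  refine ⟨ε / 2, half_pos hε, fun s' hs' => ⟨ε / 2, half_pos hε, B, fun r hr hrs => hB r hr ?_⟩⟩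
  rw [Metric.mem_ball, Real.dist_eq] at hs'
  calc |r - s| ≤ |r - s'| + |s' - s| := abs_sub_le _ _ _
    _ < ε := by linarith

lemma exists_boundedLip_of_locallyBoundedAt {p q : ℝ} (hp : 0 ≤ p) (hq : q < T)
    (h : ∀ s ∈ Set.Icc p q, LocallyBoundedAt T w s) :
    ∃ B, ∀ s ∈ Set.Icc p q, BoundedLip B (w s) := by
  have key : ∃ B, ∀ s ∈ Set.Icc p q, s ∈ Set.Ico 0 T → BoundedLip B (w s) := by
    refine isCompact_Icc.induction_on (p := fun S => ∃ B, ∀ s ∈ S, s ∈ Set.Ico 0 T →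
      BoundedLip B (w s)) ⟨0, by simp⟩ ?_ ?_ ?_
    · rintro S S' hSS' ⟨B, hB⟩
      exact ⟨B, fun s hs => hB s (hSS' hs)⟩
    · rintro S S' ⟨B, hB⟩ ⟨B', hB'⟩
      refine ⟨max B B', fun s hs hsT => ?_⟩
      rcases hs with hs | hs
      · exact (hB s hs hsT).mono (le_max_left _ _)
      · exact (hB' s hs hsT).mono (le_max_right _ _)
    · intro s hs
      obtain ⟨ε, hε, B, hB⟩ := h s hs
      exact ⟨Metric.ball s ε, mem_nhdsWithin_of_mem_nhds (Metric.ball_mem_nhds s hε), B,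
        fun r hr hrT => hB r hrT hr⟩
  obtain ⟨B, hB⟩ := key
  exact ⟨B, fun s hs => hB s hs ⟨hp.trans hs.1, hs.2.trans_lt hq⟩⟩

/-- Bounds on a closed set of times, off which the solution is locally bounded, extend to the
whole interval. -/
lemma IsNonnegSolution.exists_boundedLip_of_isClosed (hw : IsNonnegSolution f T w)
    (hf : ∀ x, 0 ≤ f x) {F : ℝ} (hF : ∀ x, f x ≤ F) {L : ℝ}
    (hL : ∀ x y, |f x - f y| ≤ L * |x - y|) {a₀ b₀ N : ℝ} {E : Set ℝ} (ha : 0 ≤ a₀) (hb : b₀ < T)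
    (hab : b₀ - a₀ ≤ 1) (hE : IsClosed E) (haE : a₀ ∈ E) (hbE : b₀ ∈ E)
    (hN : ∀ s ∈ E, s ∈ Set.Icc a₀ b₀ → BoundedLip N (w s))
    (hgood : ∀ s ∈ Set.Icc a₀ b₀, s ∉ E → LocallyBoundedAt T w s) :
    ∃ B, ∀ s ∈ Set.Icc a₀ b₀, BoundedLip B (w s) := by
  obtain ⟨B', hB'⟩ := hw.exists_boundedLip_of_gap hf hF hL N
  refine ⟨max N B', fun s hs => ?_⟩
  by_cases hsE : s ∈ E
  · exact (hN s hsE hs).mono (le_max_left _ _)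
  refine BoundedLip.mono ?_ (le_max_right N B')
  have hcl : IsCompact (E ∩ Set.Icc a₀ s) := isCompact_Icc.inter_left hE
  have hcr : IsCompact (E ∩ Set.Icc s b₀) := isCompact_Icc.inter_left hE
  set a := sSup (E ∩ Set.Icc a₀ s) with hadef
  set b := sInf (E ∩ Set.Icc s b₀) with hbdef
  have haM : a ∈ E ∩ Set.Icc a₀ s := hcl.sSup_mem ⟨a₀, haE, le_rfl, hs.1⟩
  have hbM : b ∈ E ∩ Set.Icc s b₀ := hcr.sInf_mem ⟨b₀, hbE, hs.2, le_rfl⟩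
  have has : a < s := haM.2.2.lt_of_ne fun h => hsE (h ▸ haM.1)
  have hsb : s < b := hbM.2.1.lt_of_ne fun h => hsE (h ▸ hbM.1)
  have hout : ∀ r, a < r → r < b → r ∉ E := by
    intro r h1 h2 hrE
    rcases le_total r s with h | h
    · exact absurd (le_csSup hcl.bddAbove ⟨hrE, haM.2.1.trans h1.le, h⟩) (not_le.2 h1)
    · exact absurd (csInf_le hcr.bddBelow ⟨hrE, h, h2.le.trans hbM.2.2⟩) (not_le.2 h2)
  refine hB' a b (ha.trans haM.2.1) (hbM.2.2.trans_lt hb) (by linarith [haM.2.1, hbM.2.2])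
    (fun σ r hσ hr => ?_) (hN a haM.1 ⟨haM.2.1, haM.2.2.trans hs.2⟩)
    (hN b hbM.1 ⟨hs.1.trans hbM.2.1, hbM.2.2⟩) s has hsb
  refine exists_boundedLip_of_locallyBoundedAt ((ha.trans haM.2.1).trans hσ.le)
    (hr.trans_le (hbM.2.2.trans hb.le)) fun r' hr' => ?_
  have h1 : a < r' := hσ.trans_le hr'.1
  have h2 : r' < b := hr'.2.trans_lt hr
  exact hgood r' ⟨haM.2.1.trans h1.le, h2.le.trans hbM.2.2⟩ (hout r' h1 h2)

lemma IsNonnegSolution.locallyBoundedAt (hw : IsNonnegSolution f T w)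
    (hf : ∀ x, 0 ≤ f x) {F : ℝ} (hF : ∀ x, f x ≤ F) {L : ℝ}
    (hL : ∀ x y, |f x - f y| ≤ L * |x - y|) {s : ℝ} (hs : s ∈ Set.Ico 0 T) :
    LocallyBoundedAt T w s := by
  by_contra hbad
  obtain ⟨T₂, hsT₂, hT₂⟩ := exists_between hs.2
  set P : Set ℝ := Set.Icc 0 T₂ ∩ {r | ¬ LocallyBoundedAt T w r} with hP
  have hPc : IsClosed P := isClosed_Icc.inter isOpen_locallyBoundedAt.isClosed_compl
  have hPT : ∀ r ∈ P, r ∈ Set.Ico 0 T := fun r hr => ⟨hr.1.1, hr.1.2.trans_lt hT₂⟩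
  have : CompleteSpace P := hPc.completeSpace_coe
  set A : ℕ → Set P := fun n => {r | BoundedLip n (w r)} with hA
  have hAc : ∀ n, IsClosed (A n) := by
    intro n
    have hcont : ∀ x, Continuous fun r : P => w r x := fun x =>
      continuous_iff_continuousAt.2 fun r => ContinuousAt.comp (f := fun r : P => (r : ℝ))
        (g := fun r => w r x) (hw.continuousAt_time (hPT r r.2) x) continuous_subtype_val.continuousAt
    have hAeq : A n = (⋂ x, {r : P | |w r x| ≤ n}) ∩
        ⋂ x, ⋂ y, {r : P | |w r x - w r y| ≤ n * |x - y|} := by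
      ext r
      simp [hA, BoundedLip]
    rw [hAeq]
    refine IsClosed.inter (isClosed_iInter fun x => ?_)
      (isClosed_iInter fun x => isClosed_iInter fun y => ?_)
    · exact isClosed_le (hcont x).abs continuous_const
    · exact isClosed_le ((hcont x).sub (hcont y)).abs continuous_const
  have hAU : ⋃ n, A n = Set.univ := by
    refine Set.eq_univ_of_forall fun r => Set.mem_iUnion.2 ?_
    obtain ⟨B, hB⟩ := hw.bounded r (hPT r r.2)
    obtain ⟨n, hn⟩ := exists_nat_ge B
    exact ⟨n, hB.mono hn⟩
  have hdense := dense_iUnion_interior_of_closed hAc hAU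
  obtain ⟨c, hcT₂, hcA⟩ := hdense.inter_open_nonempty {r : P | (r : ℝ) < T₂}
    (isOpen_lt continuous_subtype_val continuous_const) ⟨⟨s, ⟨hs.1, hsT₂.le⟩, hbad⟩, hsT₂⟩
  obtain ⟨n, hn⟩ := Set.mem_iUnion.1 hcA
  obtain ⟨ε₀, hε₀, hball⟩ := Metric.isOpen_iff.1 isOpen_interior c hn
  replace hcT₂ : (c : ℝ) < T₂ := hcT₂
  obtain ⟨ε, hε, hε1, hε2, hε3⟩ : ∃ ε > 0, ε < ε₀ ∧ ε ≤ 1 / 2 ∧ ε < T₂ - c := by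
    have hd : (0 : ℝ) < T₂ - c := sub_pos.2 hcT₂
    refine ⟨min (ε₀ / 2) (min (1 / 2) ((T₂ - c) / 2)), by positivity, ?_, ?_, ?_⟩
    · exact (min_le_left _ _).trans_lt (by linarith)
    · exact (min_le_right _ _).trans (min_le_left _ _)
    · exact ((min_le_right _ _).trans (min_le_right _ _)).trans_lt (by linarith)
  have hc0 : 0 ≤ (c : ℝ) := c.2.1.1
  set a₀ : ℝ := max 0 (c - ε) with ha₀
  set b₀ : ℝ := c + ε with hb₀
  have ha₀0 : 0 ≤ a₀ := le_max_left _ _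
  have ha₀c : c - ε ≤ a₀ := le_max_right _ _
  have ha₀c' : a₀ ≤ c := max_le hc0 (by linarith)
  have hb₀T : b₀ < T := by linarith
  obtain ⟨B₁, hB₁⟩ := hw.bounded a₀ ⟨ha₀0, by linarith⟩
  obtain ⟨B₂, hB₂⟩ := hw.bounded b₀ ⟨by linarith, hb₀T⟩
  have hN : ∀ r ∈ P ∪ {a₀, b₀}, r ∈ Set.Icc a₀ b₀ → BoundedLip (max n (max B₁ B₂)) (w r) := by
    rintro r (hr | hr | hr) hrI
    · have hrA : (⟨r, hr⟩ : P) ∈ A n := by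
        refine interior_subset (hball ?_)
        rw [Metric.mem_ball, Subtype.dist_eq, Real.dist_eq, abs_lt]
        constructor <;> linarith [hrI.1, hrI.2]
      exact BoundedLip.mono hrA (le_max_left _ _)
    · rw [hr]
      exact hB₁.mono ((le_max_left _ _).trans (le_max_right _ _))
    · rw [Set.mem_singleton_iff.1 hr]
      exact hB₂.mono ((le_max_right _ _).trans (le_max_right _ _))
  have hgood : ∀ r ∈ Set.Icc a₀ b₀, r ∉ P ∪ {a₀, b₀} → LocallyBoundedAt T w r := by
    intro r hrI hrE
    by_contra hrbad
    exact hrE (Or.inl ⟨⟨ha₀0.trans hrI.1, by linarith [hrI.2]⟩, hrbad⟩)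
  obtain ⟨B, hB⟩ := hw.exists_boundedLip_of_isClosed hf hF hL ha₀0 hb₀T (by linarith)
    (hPc.union (Set.toFinite {a₀, b₀}).isClosed) (by simp) (by simp) hN hgood
  refine c.2.2 ⟨ε, hε, B, fun r hr hrc => hB r ⟨max_le hr.1 ?_, ?_⟩⟩
  · linarith [(abs_lt.1 hrc).1]
  · linarith [(abs_lt.1 hrc).2]

/-- Bounds on the individual time slices are automatically locally uniform in time. -/
theorem IsNonnegSolution.exists_boundedLip (hw : IsNonnegSolution f T w)
    (hf : ∀ x, 0 ≤ f x) {F : ℝ} (hF : ∀ x, f x ≤ F) {L : ℝ}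
    (hL : ∀ x y, |f x - f y| ≤ L * |x - y|) {T₁ : ℝ} (hT₁ : T₁ < T) :
    ∃ B, ∀ s ∈ Set.Icc 0 T₁, BoundedLip B (w s) :=
  exists_boundedLip_of_locallyBoundedAt le_rfl hT₁ fun _ hs =>
    hw.locallyBoundedAt hf hF hL ⟨hs.1, hs.2.trans_lt hT₁⟩

end Baire

section Pairing

lemma BoundedLip.abs_deriv_le {B : ℝ} {φ : ℝ → ℝ} (h : BoundedLip B φ) (x : ℝ) :
    |deriv φ x| ≤ B := by
  have := norm_deriv_le_of_lip' (f := φ) (x₀ := x) h.nonneg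
    (Eventually.of_forall fun y => by simpa [Real.norm_eq_abs] using h.2 y x)
  simpa using this

lemma integrable_mul_of_bounded {m φ : ℝ → ℝ} {B : ℝ} (hm : Integrable m) (hφ : Continuous φ)
    (hB : ∀ x, |φ x| ≤ B) : Integrable fun x => m x * φ x :=
  hm.mul_bdd (c := B) hφ.aestronglyMeasurable (Eventually.of_forall hB)

/-- Derivative of a correlation, moved onto the first factor by integration by parts. -/
lemma hasDerivAt_integral_mul_shift {m φ : ℝ → ℝ} {B : ℝ} (hm : ContDiff ℝ 1 m)
    (hi : Integrable m) (hi' : Integrable (deriv m)) (hφ : ContDiff ℝ 1 φ) (hB : BoundedLip B φ)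
    (z : ℝ) :
    HasDerivAt (fun z => ∫ x, m x * φ (x + z)) (∫ x, -deriv m x * φ (x + z)) z := by
  have hφc : Continuous φ := hφ.continuous
  have hφ' : Continuous (deriv φ) := hφ.continuous_deriv le_rfl
  have hmc : Continuous m := hm.continuous
  have hd : ∀ y, HasDerivAt φ (deriv φ y) y := fun y =>
    (hφ.differentiable (by norm_num) y).hasDerivAt
  have hmd : ∀ y, HasDerivAt m (deriv m y) y := fun y =>
    (hm.differentiable (by norm_num) y).hasDerivAt
  have h1 : HasDerivAt (fun z => ∫ x, m x * φ (x + z)) (∫ x, m x * deriv φ (x + z)) z := by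
    refine (hasDerivAt_integral_of_dominated_loc_of_deriv_le (bound := fun x => ‖m x‖ * B)
      (F := fun z x => m x * φ (x + z)) (F' := fun z x => m x * deriv φ (x + z))
      univ_mem ?_ ?_ ?_ ?_ (hi.norm.mul_const B) ?_).2
    · exact Eventually.of_forall fun z => (by fun_prop : Continuous _).aestronglyMeasurable
    · exact integrable_mul_of_bounded hi (by fun_prop) (fun x => hB.1 _)
    · exact (by fun_prop : Continuous _).aestronglyMeasurable
    · refine Eventually.of_forall fun x z _ => ?_
      rw [norm_mul]
      exact mul_le_mul_of_nonneg_left (hB.abs_deriv_le _) (norm_nonneg _)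
    · refine Eventually.of_forall fun x z _ => ?_
      exact ((hd (x + z)).comp_const_add x z).const_mul (m x)
  refine h1.congr_deriv ?_
  rw [integral_mul_deriv_eq_deriv_mul_of_integrable (u := m) (v := fun x => φ (x + z))
    (u' := deriv m) (v' := fun x => deriv φ (x + z)) (fun x _ => hmd x)
    (fun x _ => (hd (x + z)).comp_add_const x z)
    (integrable_mul_of_bounded hi (by fun_prop) fun x => hB.abs_deriv_le _)
    (integrable_mul_of_bounded hi' (by fun_prop) fun x => hB.1 _)
    (integrable_mul_of_bounded hi (by fun_prop) fun x => hB.1 _), ← integral_neg]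
  simp only [neg_mul]

lemma integral_mul_heatSemigroup {m φ : ℝ → ℝ} {B : ℝ} (hi : Integrable m)
    (hφ : Continuous φ) (hB : ∀ x, |φ x| ≤ B) (h : ℝ) :
    ∫ x, m x * heatSemigroup h φ x = heatSemigroup h (fun z => ∫ x, m x * φ (x + z)) 0 := by
  unfold heatSemigroup
  simp_rw [← integral_const_mul, zero_add]
  refine integral_integral_swap (f := fun x y => m x * φ (x + √(2 * h) * y)) ?_
  have h1 : Integrable (fun p : ℝ × ℝ => m p.1)
      (volume.prod (ProbabilityTheory.gaussianReal 0 1)) := hi.comp_fst _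
  exact h1.mul_bdd (c := B) (by fun_prop : Continuous fun p : ℝ × ℝ =>
    φ (p.1 + √(2 * h) * p.2)).aestronglyMeasurable (Eventually.of_forall fun p => hB _)

/-- The generator of the heat semigroup, tested against an integrable function. -/
lemma tendsto_integral_mul_heatSemigroup {m φ : ℝ → ℝ} {B : ℝ} (hm : ContDiff ℝ 2 m)
    (hi : Integrable m) (hi' : Integrable (deriv m)) (hi'' : Integrable (deriv (deriv m)))
    (hφ : ContDiff ℝ 1 φ) (hB : BoundedLip B φ) :
    Tendsto (fun h => ∫ x, m x * ((heatSemigroup h φ x - φ x) / h)) (nhdsWithin 0 (Set.Ioi 0))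
      (nhds (∫ x, deriv (deriv m) x * φ x)) := by
  have hm1 : ContDiff ℝ 1 m := hm.of_le (by norm_num)
  have hm' : ContDiff ℝ 1 (deriv m) := by
    have : ContDiff ℝ (1 + 1) m := by norm_num; exact hm
    exact (contDiff_succ_iff_deriv.1 this).2.2
  have hφc := hφ.continuous
  set ψ : ℝ → ℝ := fun z => ∫ x, m x * φ (x + z) with hψ
  have hd1 : ∀ z, HasDerivAt ψ (-∫ x, deriv m x * φ (x + z)) z := fun z => by
    refine (hasDerivAt_integral_mul_shift hm1 hi hi' hφ hB z).congr_deriv ?_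
    simp only [neg_mul, integral_neg]
  have hd2 : ∀ z, HasDerivAt (fun z => -∫ x, deriv m x * φ (x + z))
      (∫ x, deriv (deriv m) x * φ (x + z)) z := fun z => by
    refine (hasDerivAt_integral_mul_shift hm' hi' hi'' hφ hB z).neg.congr_deriv ?_
    simp only [neg_mul, integral_neg, neg_neg]
  have he1 : deriv ψ = fun z => -∫ x, deriv m x * φ (x + z) := funext fun z => (hd1 z).deriv
  have he2 : deriv (deriv ψ) = fun z => ∫ x, deriv (deriv m) x * φ (x + z) := by
    rw [he1]
    exact funext fun z => (hd2 z).deriv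
  have hcont : Continuous (deriv (deriv ψ)) := by
    rw [he2]
    refine continuous_of_dominated (bound := fun x => ‖deriv (deriv m) x‖ * B) (fun z => ?_)
      (fun z => ?_) (hi''.norm.mul_const B) ?_
    · exact hi''.aestronglyMeasurable.mul
        (by fun_prop : Continuous fun x => φ (x + z)).aestronglyMeasurable
    · refine Eventually.of_forall fun x => ?_
      rw [norm_mul]
      exact mul_le_mul_of_nonneg_left (hB.1 _) (norm_nonneg _)
    · exact Eventually.of_forall fun x => by fun_prop
  have hψ2 : ContDiff ℝ 2 ψ := by
    have h1 : ContDiff ℝ 1 (deriv ψ) := contDiff_one_iff_deriv.2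
      ⟨fun z => by rw [he1]; exact (hd2 z).differentiableAt, hcont⟩
    have : ContDiff ℝ (1 + 1) ψ := contDiff_succ_iff_deriv.2
      ⟨fun z => (hd1 z).differentiableAt, by simp, h1⟩
    norm_num at this
    exact this
  have hψB : ∀ z, |ψ z| ≤ ∫ x, ‖m x‖ * B := fun z => by
    refine norm_integral_le_of_norm_le (f := fun x => m x * φ (x + z)) (hi.norm.mul_const B)
      (Eventually.of_forall fun x => ?_)
    rw [norm_mul]
    exact mul_le_mul_of_nonneg_left (hB.1 _) (norm_nonneg _)
  have key := tendsto_heatSemigroup_generator hψ2 hψB 0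
  rw [he2] at key
  simp only [add_zero] at key
  refine key.congr fun h => ?_
  have hcs : Continuous fun x => heatSemigroup h φ x :=
    (continuous_heatSemigroup hφc hB.1).comp (by fun_prop : Continuous fun x : ℝ => (h, x))
  rw [← integral_mul_heatSemigroup hi hφc hB.1]
  simp only [hψ, add_zero]
  rw [← integral_sub (integrable_mul_of_bounded hi hcs (abs_heatSemigroup_le hB.1 h))
    (integrable_mul_of_bounded hi hφc hB.1), ← integral_div]
  congr 1
  funext x
  ring

/-- `v` is an integrable solution on `[0,t]` of `v_s = -v_xx + 2 f v`, with `v` and `v_s` dominated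
by `g`. -/
structure IsDualSolution (f : ℝ → ℝ) (t : ℝ) (g : ℝ → ℝ) (v : ℝ → ℝ → ℝ) : Prop where
  eqn : ∀ s ∈ Set.Icc (0 : ℝ) t, ∀ x, HasDerivAt (fun r => v r x)
    (-(deriv (deriv (v s)) x) + 2 * f x * v s x) s
  contDiff : ∀ s ∈ Set.Icc (0 : ℝ) t, ContDiff ℝ 2 (v s)
  integrable : ∀ s ∈ Set.Icc (0 : ℝ) t, Integrable (v s)
  integrable_deriv : ∀ s ∈ Set.Icc (0 : ℝ) t, Integrable (deriv (v s))
  integrable_deriv_deriv : ∀ s ∈ Set.Icc (0 : ℝ) t, Integrable (deriv (deriv (v s)))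
  integrable_bound : Integrable g
  abs_le : ∀ s ∈ Set.Icc (0 : ℝ) t, ∀ x, |v s x| ≤ g x
  abs_deriv_le : ∀ s ∈ Set.Icc (0 : ℝ) t, ∀ x,
    |-(deriv (deriv (v s)) x) + 2 * f x * v s x| ≤ g x

variable {f g : ℝ → ℝ} {t T F T₁ B : ℝ} {w v : ℝ → ℝ → ℝ}

lemma IsDualSolution.abs_sub_le (hv : IsDualSolution f t g v) {s r : ℝ}
    (hs : s ∈ Set.Icc 0 t) (hr : r ∈ Set.Icc 0 t) (x : ℝ) : |v r x - v s x| ≤ g x * |r - s| :=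
  (convex_Icc 0 t).norm_image_sub_le_of_norm_hasDerivWithin_le
    (fun s hs => (hv.eqn s hs x).hasDerivWithinAt) (fun s hs => hv.abs_deriv_le s hs x) hs hr

lemma IsDualSolution.tendsto_integral_slope_mul (hv : IsDualSolution f t g v)
    (hw : IsNonnegSolution f T w) (htT₁ : t < T₁) (hT₁ : T₁ < T)
    (hB : ∀ s ∈ Set.Icc 0 T₁, BoundedLip B (w s)) {s : ℝ} (hs : s ∈ Set.Ico 0 t) :
    Tendsto (fun h => ∫ x, (v (s + h) x - v s x) / h * w (s + h) x) (nhdsWithin 0 (Set.Ioi 0))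
      (nhds (∫ x, (-(deriv (deriv (v s)) x) + 2 * f x * v s x) * w s x)) := by
  have hsI : s ∈ Set.Icc 0 t := ⟨hs.1, hs.2.le⟩
  have hmem : ∀ᶠ h in nhdsWithin (0 : ℝ) (Set.Ioi 0), h ∈ Set.Ioo 0 (t - s) :=
    Ioo_mem_nhdsGT (sub_pos.2 hs.2)
  have hI : ∀ h ∈ Set.Ioo 0 (t - s), s + h ∈ Set.Icc 0 t := fun h hh =>
    ⟨by linarith [hh.1, hs.1], by linarith [hh.2]⟩
  refine tendsto_integral_filter_of_dominated_convergence (fun x => g x * B) ?_ ?_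
    (hv.integrable_bound.mul_const B) ?_
  · filter_upwards [hmem] with h hh
    have h1 := (hv.contDiff _ (hI h hh)).continuous
    have h2 := (hv.contDiff _ hsI).continuous
    have h3 := hw.continuous (s := s + h) ⟨(hI h hh).1, by linarith [(hI h hh).2]⟩
    exact (by fun_prop : Continuous _).aestronglyMeasurable
  · filter_upwards [hmem] with h hh
    refine Eventually.of_forall fun x => ?_
    have h1 := hv.abs_sub_le hsI (hI h hh) x
    rw [add_sub_cancel_left, abs_of_pos hh.1] at h1
    have h2 := (hB (s + h) ⟨(hI h hh).1, by linarith [(hI h hh).2]⟩).1 x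
    rw [Real.norm_eq_abs, abs_mul, abs_div, abs_of_pos hh.1]
    refine mul_le_mul ?_ h2 (abs_nonneg _) ((abs_nonneg _).trans (hv.abs_le s hsI x))
    rwa [div_le_iff₀ hh.1]
  · refine Eventually.of_forall fun x => ?_
    have h1 := (hv.eqn s hsI x).tendsto_slope_zero_right
    have h2 : Tendsto (fun h => w (s + h) x) (nhdsWithin 0 (Set.Ioi 0)) (nhds (w s x)) := by
      have h3 : Tendsto (fun h : ℝ => s + h) (nhdsWithin 0 (Set.Ioi 0)) (nhds s) := by
        have : Continuous fun h : ℝ => s + h := by fun_prop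
        simpa using (this.tendsto 0).mono_left nhdsWithin_le_nhds
      exact (hw.continuousAt_time ⟨hs.1, by linarith [hs.2]⟩ x).tendsto.comp h3
    refine (h1.mul h2).congr fun h => ?_
    simp only [smul_eq_mul]
    ring

lemma IsNonnegSolution.tendsto_integral_mul_sub_heatSemigroup (hw : IsNonnegSolution f T w)
    (hf : ∀ x, 0 ≤ f x) (hF : ∀ x, f x ≤ F) (hT₁ : T₁ < T)
    (hB : ∀ s ∈ Set.Icc 0 T₁, BoundedLip B (w s)) {s : ℝ} (hs : s ∈ Set.Ico 0 T₁)
    {m : ℝ → ℝ} (hm : Integrable m) :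
    Tendsto (fun h => ∫ x, m x * ((w (s + h) x - heatSemigroup h (w s) x) / h))
      (nhdsWithin 0 (Set.Ioi 0)) (nhds (∫ x, m x * (-2 * f x * w s x + w s x ^ 2))) := by
  have hsT : s ∈ Set.Ico 0 T := ⟨hs.1, hs.2.trans hT₁⟩
  have hmem : ∀ᶠ h in nhdsWithin (0 : ℝ) (Set.Ioi 0), h ∈ Set.Ioo 0 (T₁ - s) :=
    Ioo_mem_nhdsGT (sub_pos.2 hs.2)
  have hI : ∀ h ∈ Set.Ioo 0 (T₁ - s), s + h ∈ Set.Ico 0 T := fun h hh =>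
    ⟨by linarith [hh.1, hs.1], by linarith [hh.2]⟩
  have hBs := hB s ⟨hs.1, hs.2.le⟩
  refine tendsto_integral_filter_of_dominated_convergence
    (fun x => ‖m x‖ * (2 * F * B + B ^ 2)) ?_ ?_ (hm.norm.mul_const _) ?_
  · filter_upwards [hmem] with h hh
    have h1 := hw.continuous (hI h hh)
    have h2 : Continuous fun x => heatSemigroup h (w s) x :=
      (continuous_heatSemigroup (hw.continuous hsT) hBs.1).comp
        (by fun_prop : Continuous fun x : ℝ => (h, x))
    exact hm.aestronglyMeasurable.mul (by fun_prop : Continuous _).aestronglyMeasurable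
  · filter_upwards [hmem] with h hh
    refine Eventually.of_forall fun x => ?_
    rw [norm_mul]
    refine mul_le_mul_of_nonneg_left ?_ (norm_nonneg _)
    have h1 := hw.abs_sub_heatSemigroup_le hf hF hs.1 (s := s + h) (by linarith [hh.1])
      (hI h hh).2 (fun r hr => hB r ⟨hs.1.trans hr.1, by linarith [hr.2, hh.2]⟩) x
    rw [add_sub_cancel_left] at h1
    rw [Real.norm_eq_abs, abs_div, abs_of_pos hh.1, div_le_iff₀ hh.1]
    exact h1
  · refine Eventually.of_forall fun x => ?_
    have h1 := (hw.eqn s hsT x).tendsto_slope_zero_right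
    have h2 := tendsto_heatSemigroup_generator (hw.contDiff s hsT) hBs.1 x
    have h3 := ((h1.sub h2).const_mul (m x))
    have h4 : m x * (deriv (deriv (w s)) x - 2 * f x * w s x + w s x ^ 2 - deriv (deriv (w s)) x) =
        m x * (-2 * f x * w s x + w s x ^ 2) := by ring
    rw [h4] at h3
    refine h3.congr fun h => ?_
    simp only [smul_eq_mul]
    ring

lemma hasDerivWithinAt_Ici_integral_mul (hv : IsDualSolution f t g v)
    (hw : IsNonnegSolution f T w) (hf : ∀ x, 0 ≤ f x) (hF : ∀ x, f x ≤ F) (hfc : Continuous f)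
    (htT₁ : t < T₁) (hT₁ : T₁ < T) (hB : ∀ s ∈ Set.Icc 0 T₁, BoundedLip B (w s))
    {s : ℝ} (hs : s ∈ Set.Ico 0 t) :
    HasDerivWithinAt (fun r => ∫ x, v r x * w r x) (∫ x, v s x * w s x ^ 2) (Set.Ici s) s := by
  have hsI : s ∈ Set.Icc 0 t := ⟨hs.1, hs.2.le⟩
  have hsT : s ∈ Set.Ico 0 T := ⟨hs.1, by linarith [hs.2]⟩
  have hBs := hB s ⟨hs.1, by linarith [hs.2]⟩
  have hcw := hw.continuous hsT
  have hiv := hv.integrable s hsI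
  have h1 := hv.tendsto_integral_slope_mul hw htT₁ hT₁ hB hs
  have h2 := hw.tendsto_integral_mul_sub_heatSemigroup hf hF hT₁ hB ⟨hs.1, hs.2.trans htT₁⟩ hiv
  have h3 := tendsto_integral_mul_heatSemigroup (hv.contDiff s hsI) hiv
    (hv.integrable_deriv s hsI) (hv.integrable_deriv_deriv s hsI)
    ((hw.contDiff s hsT).of_le (by norm_num)) hBs
  have hfB : ∀ x, |f x| ≤ F := fun x => by rw [abs_of_nonneg (hf x)]; exact hF x
  have hF0 : 0 ≤ F := (hf 0).trans (hF 0)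
  have hwB : ∀ x, |w s x| ≤ B := hBs.1
  have hi1 : Integrable fun x => (-(deriv (deriv (v s)) x) + 2 * f x * v s x) * w s x := by
    have e1 : Integrable fun x => v s x * (2 * f x) :=
      integrable_mul_of_bounded hiv (by fun_prop) (B := 2 * F) fun x => by
        rw [abs_mul, abs_two]; linarith [hfB x]
    refine integrable_mul_of_bounded ?_ hcw hwB
    refine ((hv.integrable_deriv_deriv s hsI).neg.add e1).congr (Eventually.of_forall fun x => ?_)
    simp only [Pi.add_apply, Pi.neg_apply]
    ring
  have hi2 : Integrable fun x => v s x * (-2 * f x * w s x + w s x ^ 2) := by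
    refine integrable_mul_of_bounded hiv (by fun_prop) (B := 2 * F * B + B ^ 2) fun x => ?_
    refine (abs_add_le _ _).trans (add_le_add ?_ ?_)
    · rw [abs_mul, abs_mul, abs_neg, abs_two]
      gcongr
      exacts [hfB x, hwB x]
    · rw [abs_pow]
      gcongr
      exact hwB x
  have hi3 : Integrable fun x => deriv (deriv (v s)) x * w s x :=
    integrable_mul_of_bounded (hv.integrable_deriv_deriv s hsI) hcw hwB
  have hlim : (∫ x, (-(deriv (deriv (v s)) x) + 2 * f x * v s x) * w s x) +
      ((∫ x, v s x * (-2 * f x * w s x + w s x ^ 2)) + ∫ x, deriv (deriv (v s)) x * w s x) =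
      ∫ x, v s x * w s x ^ 2 := by
    have hi23 : Integrable fun x =>
        v s x * (-2 * f x * w s x + w s x ^ 2) + deriv (deriv (v s)) x * w s x := hi2.add hi3
    rw [← integral_add hi2 hi3, ← integral_add hi1 hi23]
    congr 1
    funext x
    ring
  rw [← hasDerivWithinAt_Ioi_iff_Ici, hasDerivWithinAt_iff_tendsto_slope' (by simp)]
  have hshift : Tendsto (fun r => r - s) (nhdsWithin s (Set.Ioi s)) (nhdsWithin 0 (Set.Ioi 0)) := by
    refine tendsto_nhdsWithin_iff.2 ⟨?_, ?_⟩
    · have : Continuous fun r : ℝ => r - s := by fun_prop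
      simpa using (this.tendsto s).mono_left nhdsWithin_le_nhds
    · filter_upwards [self_mem_nhdsWithin] with r hr
      exact sub_pos.2 (Set.mem_Ioi.1 hr)
  have h4 := (h1.add (h2.add h3)).comp hshift
  rw [hlim] at h4
  refine h4.congr' ?_
  filter_upwards [Ioo_mem_nhdsGT hs.2] with r hr
  have hrI : r ∈ Set.Icc 0 t := ⟨hs.1.trans hr.1.le, hr.2.le⟩
  have hrT : r ∈ Set.Ico 0 T := ⟨hrI.1, by linarith [hrI.2]⟩
  have hBr := hB r ⟨hrI.1, by linarith [hrI.2]⟩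
  have hcr := hw.continuous hrT
  have hcS : Continuous fun x => heatSemigroup (r - s) (w s) x :=
    (continuous_heatSemigroup hcw hwB).comp (by fun_prop : Continuous fun x : ℝ => (r - s, x))
  have hSB := abs_heatSemigroup_le hwB (r - s)
  have hne : r - s ≠ 0 := (sub_pos.2 hr.1).ne'
  have j0 := integrable_mul_of_bounded (hv.integrable r hrI) hcr hBr.1
  have j1 := integrable_mul_of_bounded hiv hcr hBr.1
  have j2 := integrable_mul_of_bounded hiv hcS hSB
  have j3 := integrable_mul_of_bounded hiv hcw hwB
  have e1 : ∫ x, (v r x - v s x) / (r - s) * w r x =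
      ((∫ x, v r x * w r x) - ∫ x, v s x * w r x) / (r - s) := by
    rw [← integral_sub j0 j1, ← integral_div]
    congr 1; funext x; ring
  have e2 : ∫ x, v s x * ((w r x - heatSemigroup (r - s) (w s) x) / (r - s)) =
      ((∫ x, v s x * w r x) - ∫ x, v s x * heatSemigroup (r - s) (w s) x) / (r - s) := by
    rw [← integral_sub j1 j2, ← integral_div]
    congr 1; funext x; ring
  have e3 : ∫ x, v s x * ((heatSemigroup (r - s) (w s) x - w s x) / (r - s)) =
      ((∫ x, v s x * heatSemigroup (r - s) (w s) x) - ∫ x, v s x * w s x) / (r - s) := by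
    rw [← integral_sub j2 j3, ← integral_div]
    congr 1; funext x; ring
  simp only [Function.comp_apply, add_sub_cancel]
  rw [e1, e2, e3, slope_def_field]
  ring

lemma continuousOn_integral_mul_pow (hv : IsDualSolution f t g v) (hw : IsNonnegSolution f T w)
    (htT₁ : t < T₁) (hT₁ : T₁ < T) (hB : ∀ s ∈ Set.Icc 0 T₁, BoundedLip B (w s)) (n : ℕ) :
    ContinuousOn (fun s => ∫ x, v s x * w s x ^ n) (Set.Icc 0 t) := by
  have hT : ∀ s ∈ Set.Icc 0 t, s ∈ Set.Ico 0 T := fun s hs => ⟨hs.1, by linarith [hs.2]⟩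
  refine continuousOn_of_dominated (bound := fun x => g x * B ^ n) (fun s hs => ?_)
    (fun s hs => ?_) (hv.integrable_bound.mul_const _) ?_
  · have h1 := (hv.contDiff s hs).continuous
    have h2 := hw.continuous (hT s hs)
    exact (by fun_prop : Continuous _).aestronglyMeasurable
  · refine Eventually.of_forall fun x => ?_
    have h1 := (hB s ⟨hs.1, by linarith [hs.2]⟩).1 x
    rw [norm_mul, norm_pow]
    exact mul_le_mul (hv.abs_le s hs x) (pow_le_pow_left₀ (abs_nonneg _) h1 n) (by positivity)
      ((abs_nonneg _).trans (hv.abs_le s hs x))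
  · refine Eventually.of_forall fun x s hs => ?_
    exact ((hv.eqn s hs x).continuousAt.mul
      ((hw.continuousAt_time (hT s hs) x).pow n)).continuousWithinAt

/-- A continuous function with a continuous right derivative is differentiable. -/
lemma hasDerivWithinAt_Icc_of_right {J k : ℝ → ℝ} {t : ℝ} (ht : 0 ≤ t)
    (hJ : ContinuousOn J (Set.Icc 0 t)) (hk : ContinuousOn k (Set.Icc 0 t))
    (hd : ∀ s ∈ Set.Ico 0 t, HasDerivWithinAt J (k s) (Set.Ici s) s) {s : ℝ}
    (hs : s ∈ Set.Icc 0 t) : HasDerivWithinAt J (k s) (Set.Icc 0 t) s := by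
  set k' : ℝ → ℝ := fun r => k (max 0 (min r t)) with hk'
  have hkc : Continuous k' := hk.comp_continuous (by fun_prop) fun r =>
    ⟨le_max_left _ _, max_le ht (min_le_right _ _)⟩
  have hkk : ∀ r ∈ Set.Icc 0 t, k' r = k r := fun r hr => by
    simp only [hk', min_eq_left hr.2, max_eq_right hr.1]
  set G : ℝ → ℝ := fun r => ∫ y in (0 : ℝ)..r, k' y with hG
  have hGd : ∀ r, HasDerivAt G (k' r) r := fun r =>
    (hkc.integral_hasStrictDerivAt 0 r).hasDerivAt
  have hconst : ∀ r ∈ Set.Icc 0 t, J r - G r = J 0 - G 0 := by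
    refine constant_of_has_deriv_right_zero (f := fun r => J r - G r)
      (hJ.sub fun r _ => (hGd r).continuousAt.continuousWithinAt) fun r hr => ?_
    refine ((hd r hr).sub (hGd r).hasDerivWithinAt).congr_deriv ?_
    rw [hkk r ⟨hr.1, hr.2.le⟩, sub_self]
  have h1 : HasDerivWithinAt (fun r => G r + (J 0 - G 0)) (k s) (Set.Icc 0 t) s := by
    rw [← hkk s hs]
    exact ((hGd s).add_const _).hasDerivWithinAt
  refine h1.congr (fun r hr => ?_) ?_
  · linarith [hconst r hr]
  · linarith [hconst s hs]

/-- Cauchy–Schwarz for the weighted measure with density `m`. -/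
lemma sq_integral_mul_div_le {m φ : ℝ → ℝ} {B : ℝ} (hm : Integrable m) (hm0 : ∀ x, 0 ≤ m x)
    (hpos : 0 < ∫ x, m x) (hφ : Continuous φ) (hB : ∀ x, |φ x| ≤ B) :
    (∫ x, m x * φ x) ^ 2 / (∫ x, m x) ≤ ∫ x, m x * φ x ^ 2 := by
  have h1 : Integrable fun x => m x * φ x := integrable_mul_of_bounded hm hφ hB
  have h2 : Integrable fun x => m x * φ x ^ 2 :=
    integrable_mul_of_bounded hm (by fun_prop) (B := B ^ 2) fun x => by
      rw [abs_pow]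
      exact pow_le_pow_left₀ (abs_nonneg _) (hB x) 2
  set c := (∫ x, m x * φ x) / ∫ x, m x with hc
  have h3 : 0 ≤ ∫ x, m x * (φ x - c) ^ 2 :=
    integral_nonneg fun x => mul_nonneg (hm0 x) (sq_nonneg _)
  have h4 : ∫ x, m x * (φ x - c) ^ 2 =
      (∫ x, m x * φ x ^ 2) - 2 * c * (∫ x, m x * φ x) + c ^ 2 * ∫ x, m x := by
    have h12 : Integrable fun x => m x * φ x ^ 2 - 2 * c * (m x * φ x) := h2.sub (h1.const_mul _)
    rw [← integral_const_mul, ← integral_const_mul, ← integral_sub h2 (h1.const_mul _),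
      ← integral_add h12 (hm.const_mul _)]
    congr 1
    funext x
    ring
  have h5 : c * ∫ x, m x = ∫ x, m x * φ x := div_mul_cancel₀ _ hpos.ne'
  have h6 : (∫ x, m x * φ x) ^ 2 / (∫ x, m x) = c * ∫ x, m x * φ x := by rw [hc]; ring
  have h7 : c ^ 2 * ∫ x, m x = c * ∫ x, m x * φ x := by rw [pow_two, mul_assoc, h5]
  rw [h6]
  linarith

end Pairing

lemma exists_le_of_tendsto_cocompact {f : ℝ → ℝ} (hf : Continuous f)
    (h : Tendsto f (cocompact ℝ) (nhds 0)) : ∃ F, ∀ x, f x ≤ F := by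
  obtain ⟨S, hS, hout⟩ := mem_cocompact.1 (h.eventually (gt_mem_nhds one_pos))
  obtain ⟨M, hM⟩ := hS.bddAbove_image hf.continuousOn
  refine ⟨max M 1, fun x => ?_⟩
  by_cases hx : x ∈ S
  · exact (hM ⟨x, hx, rfl⟩).trans (le_max_left _ _)
  · exact (hout hx).le.trans (le_max_right _ _)

lemma abs_sub_le_of_abs_deriv_le {φ : ℝ → ℝ} {L : ℝ} (hφ : Differentiable ℝ φ)
    (hL : ∀ x, |deriv φ x| ≤ L) (x y : ℝ) : |φ x - φ y| ≤ L * |x - y| :=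
  convex_univ.norm_image_sub_le_of_norm_deriv_le (fun x _ => hφ x) (fun x _ => hL x)
    (Set.mem_univ y) (Set.mem_univ x)

end HeatPairing

/-- Lemma (fence for the pairing): if `u ≤ 0` is a bounded classical solution of
`∂u/∂s = ∂²u/∂x² − 2 f u − u²` on `[0,T) × ℝ` and `v ≥ 0` solves the backward equation
`∂v/∂s = −∂²v/∂x² + 2 f v` on `[0,t] × ℝ` with the stated regularity, integrability,
decay, positivity, and locally-uniform domination, then `J(s) = ∫ v(s,x) u(s,x) dx` is
differentiable on `[0,t]` with `J'(s) ≤ −J(s)² / ‖v(s,·)‖_{L¹}`. -/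
theorem fence_for_pairing
    (f : ℝ → ℝ) (hf_smooth : ContDiff ℝ (⊤ : ℕ∞) f) (hf_pos : ∀ x, 0 < f x)
    (hf_decay : Tendsto f (cocompact ℝ) (nhds 0))
    (hf_d1 : ∃ M : ℝ, ∀ x, |deriv f x| ≤ M)
    (hf_d2 : ∃ M : ℝ, ∀ x, |deriv (deriv f) x| ≤ M)
    (t T : ℝ) (ht : 0 < t) (htT : t < T)
    (u : ℝ → ℝ → ℝ)
    (hu_eq : ∀ s ∈ Set.Ico (0 : ℝ) T, ∀ x : ℝ,
      HasDerivAt (fun τ => u τ x)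
        (deriv (deriv (u s)) x - 2 * f x * u s x - (u s x) ^ 2) s)
    (hu_reg : ∀ s ∈ Set.Ico (0 : ℝ) T, ContDiff ℝ 2 (u s))
    (hu_nonpos : ∀ s ∈ Set.Ico (0 : ℝ) T, ∀ x, u s x ≤ 0)
    (hu_bdd : ∀ s ∈ Set.Ico (0 : ℝ) T, ∃ M : ℝ, ∀ x,
      |u s x| ≤ M ∧ |deriv (u s) x| ≤ M)
    (v : ℝ → ℝ → ℝ)
    (hv_nonneg : ∀ s ∈ Set.Icc (0 : ℝ) t, ∀ x, 0 ≤ v s x)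
    (hv_eq : ∀ s ∈ Set.Icc (0 : ℝ) t, ∀ x : ℝ,
      HasDerivAt (fun τ => v τ x)
        (-(deriv (deriv (v s)) x) + 2 * f x * v s x) s)
    (hv_reg : ∀ s ∈ Set.Icc (0 : ℝ) t, ContDiff ℝ 2 (v s))
    (hv_t_cont : ∀ s ∈ Set.Icc (0 : ℝ) t,
      Continuous (fun x => deriv (fun τ => v τ x) s))
    (hv_int : ∀ s ∈ Set.Icc (0 : ℝ) t,
      Integrable (v s) ∧ Integrable (deriv (v s)) ∧
        Integrable (deriv (deriv (v s))) ∧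
        Integrable (fun x => deriv (fun τ => v τ x) s))
    (hv_decay : ∀ s ∈ Set.Icc (0 : ℝ) t,
      Tendsto (v s) (cocompact ℝ) (nhds 0) ∧
        Tendsto (deriv (v s)) (cocompact ℝ) (nhds 0) ∧
        Tendsto (deriv (deriv (v s))) (cocompact ℝ) (nhds 0) ∧
        Tendsto (fun x => deriv (fun τ => v τ x) s) (cocompact ℝ) (nhds 0))
    (hv_unif : ∃ g : ℝ → ℝ, Integrable g ∧ ∀ s ∈ Set.Icc (0 : ℝ) t, ∀ x,
      |v s x| ≤ g x ∧ |deriv (fun τ => v τ x) s| ≤ g x)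
    (hv_pos : ∀ s ∈ Set.Icc (0 : ℝ) t, 0 < ∫ x, v s x) :
    ∃ J' : ℝ → ℝ, ∀ s ∈ Set.Icc (0 : ℝ) t,
      HasDerivWithinAt (fun σ => ∫ x, v σ x * u σ x) (J' s) (Set.Icc (0 : ℝ) t) s ∧
        J' s ≤ -(∫ x, v s x * u s x) ^ 2 / (∫ x, |v s x|) := by
  obtain ⟨g, hg, hgv⟩ := hv_unif
  obtain ⟨L, hL⟩ := hf_d1
  obtain ⟨F, hF⟩ := HeatPairing.exists_le_of_tendsto_cocompact hf_smooth.continuous hf_decay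
  have hf0 : ∀ x, 0 ≤ f x := fun x => (hf_pos x).le
  have hLip := HeatPairing.abs_sub_le_of_abs_deriv_le (hf_smooth.differentiable (by simp)) hL
  have hw : HeatPairing.IsNonnegSolution f T fun s x => -u s x := by
    refine ⟨fun s hs x => ?_, fun s hs => (hu_reg s hs).neg,
      fun s hs x => neg_nonneg.2 (hu_nonpos s hs x), fun s hs => ?_⟩
    · refine (hu_eq s hs x).neg.congr_deriv ?_
      have h1 : deriv (fun x => -u s x) = fun x => -deriv (u s) x := funext fun x => deriv.fun_neg
      have h2 : deriv (deriv fun x => -u s x) x = -deriv (deriv (u s)) x := by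
        rw [h1]
        exact deriv.fun_neg
      rw [h2]
      ring
    · obtain ⟨M, hM⟩ := hu_bdd s hs
      refine ⟨M, fun x => by rw [abs_neg]; exact (hM x).1, fun x y => ?_⟩
      have h1 := HeatPairing.abs_sub_le_of_abs_deriv_le
        ((hu_reg s hs).differentiable (by norm_num)) (fun x => (hM x).2) x y
      rwa [neg_sub_neg, abs_sub_comm]
  obtain ⟨T₁, htT₁, hT₁⟩ := exists_between htT
  obtain ⟨B, hB⟩ := hw.exists_boundedLip hf0 hF hLip hT₁
  have hv : HeatPairing.IsDualSolution f t g v :=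
    { eqn := hv_eq
      contDiff := hv_reg
      integrable := fun s hs => (hv_int s hs).1
      integrable_deriv := fun s hs => (hv_int s hs).2.1
      integrable_deriv_deriv := fun s hs => (hv_int s hs).2.2.1
      integrable_bound := hg
      abs_le := fun s hs x => (hgv s hs x).1
      abs_deriv_le := fun s hs x => by
        rw [← (hv_eq s hs x).deriv]
        exact (hgv s hs x).2 }
  have hd : ∀ s ∈ Set.Icc 0 t, HasDerivWithinAt (fun r => ∫ x, v r x * -u r x)
      (∫ x, v s x * (-u s x) ^ 2) (Set.Icc 0 t) s := fun s hs =>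
    HeatPairing.hasDerivWithinAt_Icc_of_right (k := fun s => ∫ x, v s x * (-u s x) ^ 2) ht.le
      (by simpa using HeatPairing.continuousOn_integral_mul_pow hv hw htT₁ hT₁ hB 1)
      (HeatPairing.continuousOn_integral_mul_pow hv hw htT₁ hT₁ hB 2)
      (fun s hs => HeatPairing.hasDerivWithinAt_Ici_integral_mul hv hw hf0 hF
        hf_smooth.continuous htT₁ hT₁ hB hs) hs
  refine ⟨fun s => -∫ x, v s x * u s x ^ 2, fun s hs => ⟨?_, ?_⟩⟩
  · simpa [integral_neg, Pi.neg_def] using (hd s hs).neg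
  · obtain ⟨M, hM⟩ := hu_bdd s ⟨hs.1, hs.2.trans_lt htT⟩
    simp only [abs_of_nonneg (hv_nonneg s hs _)]
    rw [neg_div, neg_le_neg_iff]
    exact HeatPairing.sq_integral_mul_div_le (hv_int s hs).1 (hv_nonneg s hs) (hv_pos s hs)
      (hu_reg s ⟨hs.1, hs.2.trans_lt htT⟩).continuous fun x => (hM x).1
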